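/- If J ≤ Γ_g is a finitely generated subgroup, then the core surface Core(J) is compact. -/

import Mathlib

/-!
Formalization preamble for "Core Surfaces" (Magee–Puder).

We work with a fixed combinatorial (CW) model.  The surface `Σ_g` has one vertex,
`2g` directed labeled edges (the label `2i` plays the role of `a_{i+1}` and `2i+1`
the role of `b_{i+1}`), and one `4g`-gon glued along `[a₁,b₁]⋯[a_g,b_g]`.

* `Gamma g` is the surface group, presented by the single relator.
* A `Complex g` is a combinatorial 2-complex with directed, labeled edges and
  2-cells given by their boundary walks; coverings of `Σ_g` are the complexes in
  which every vertex has exactly one incoming/outgoing edge of each label, every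
  walk reading the relator is closed, and every closed walk reading the relator
  bounds exactly one face (`IsCovering`).  A tiled surface is a complex that
  embeds into such a covering (`IsTiledSurface`).
* Blocks, chains, boundary cycles (via the ribbon structure coming from the fixed
  cyclic order of the `4g` half-edges around a vertex of `Σ_g`), boundary-reduced
  and strongly boundary-reduced surfaces are defined combinatorially.
* Homotopy of edge-walks is the edge-path-group homotopy: backtrack insertions and
  insertions of boundaries of (present) faces.
* `cover g J` is the covering space `J\~Σ_g` of `Σ_g` associated to a subgroup
  `J ≤ Γ_g` (vertices = right cosets), and `coreSub g J` is the core surface of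
  `J`, defined exactly as in the paper: the union of all shortest representative
  cycles of essential free-homotopy classes, together with all components of the
  complement containing finitely many `4g`-gons.
-/

noncomputable section

namespace CS

/-- Signed letters over the generators `a₁,b₁,…,a_g,b_g` of `Γ_g`
(`a_{i+1} ↦ 2i`, `b_{i+1} ↦ 2i+1`); `true` means a positive letter. -/
abbrev Letter (g : ℕ) := Fin (2 * g) × Bool

/-- The label of the `p`-th letter of the relator `[a₁,b₁][a₂,b₂]⋯[a_g,b_g]`. -/
def relLabel (g : ℕ) (p : Fin (4 * g)) : Fin (2 * g) :=
  ⟨2 * ((p : ℕ) / 4) + ((p : ℕ) % 4) % 2, by have := p.2; omega⟩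

/-- The sign of the `p`-th letter of the relator. -/
def relSign (g : ℕ) (p : Fin (4 * g)) : Bool := decide ((p : ℕ) % 4 < 2)

/-- The relator `[a₁,b₁][a₂,b₂]⋯[a_g,b_g]` as a word (list of signed letters). -/
def relatorWord (g : ℕ) : List (Letter g) :=
  (List.finRange (4 * g)).map fun p => (relLabel g p, relSign g p)

/-- The relator as an element of the free group on the `2g` generators. -/
def relatorF (g : ℕ) : FreeGroup (Fin (2 * g)) :=
  ((relatorWord g).map fun l => if l.2 then FreeGroup.of l.1 else (FreeGroup.of l.1)⁻¹).prod

/-- The surface group `Γ_g = ⟨a₁,b₁,…,a_g,b_g ∣ [a₁,b₁]⋯[a_g,b_g]⟩`. -/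
abbrev Gamma (g : ℕ) := PresentedGroup ({relatorF g} : Set (FreeGroup (Fin (2 * g))))

/-- The image of a signed letter in `Γ_g`. -/
def letterG {g : ℕ} (l : Letter g) : Gamma g :=
  if l.2 then PresentedGroup.of l.1 else (PresentedGroup.of l.1)⁻¹

/-- The image of a word in `Γ_g`. -/
def wordG {g : ℕ} (w : List (Letter g)) : Gamma g := (w.map letterG).prod

/-- `ℓ(γ^{Γ_g})`: the minimal length of a word in the generators representing the
conjugacy class of `γ` in `Γ_g`. -/
def conjLen {g : ℕ} (γ : Gamma g) : ℕ :=
  sInf {n | ∃ w : List (Letter g), w.length = n ∧ ∃ x : Gamma g, x * wordG w * x⁻¹ = γ}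

/-! ### Half-edge positions around a vertex of `Σ_g`

The `4g` half-edges around the vertex `o` of `Σ_g` come in the (clockwise) cyclic
order `a₁`-out, `b₁`-in, `a₁`-in, `b₁`-out, `a₂`-out, `b₂`-in, `a₂`-in, `b₂`-out, …
-/

/-- Position of the outgoing `ℓ`-labeled half-edge in the cyclic order. -/
def posOut {g : ℕ} (ℓ : Fin (2 * g)) : ℕ :=
  if (ℓ : ℕ) % 2 = 0 then 2 * (ℓ : ℕ) else 2 * (ℓ : ℕ) + 1

/-- Position of the incoming `ℓ`-labeled half-edge in the cyclic order. -/
def posIn {g : ℕ} (ℓ : Fin (2 * g)) : ℕ :=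
  if (ℓ : ℕ) % 2 = 0 then 2 * (ℓ : ℕ) + 2 else 2 * (ℓ : ℕ) - 1

/-- The position of the half-edge through which a traversal of a dart with signed
letter `s` *arrives* at its terminal vertex. -/
def posArr {g : ℕ} (s : Letter g) : ℕ := if s.2 then posIn s.1 else posOut s.1

/-- The position of the half-edge through which a traversal of a dart with signed
letter `s` *leaves* its initial vertex. -/
def posLv {g : ℕ} (s : Letter g) : ℕ := if s.2 then posOut s.1 else posIn s.1

/-- The number of half-edges strictly between the arrival half-edge of `s` and the
departure half-edge of `t`, in the clockwise cyclic order of the `4g` half-edges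
around a vertex. -/
def gapN {g : ℕ} (s t : Letter g) : ℕ := (posLv t + 4 * g - (posArr s + 1)) % (4 * g)

/-! ### Combinatorial complexes -/

/-- A combinatorial at-most-2-dimensional CW-complex with directed edges labeled by
the generators of `Γ_g`, and 2-cells recorded by their boundary walks (lists of
darts, i.e. edges with a direction of traversal). -/
structure Complex (g : ℕ) where
  V : Type
  E : Type
  F : Type
  src : E → V
  dst : E → V
  lab : E → Fin (2 * g)
  bdry : F → List (E × Bool)

namespace Complex

variable {g : ℕ} (Y : Complex g)

/-- Darts: edges together with a direction of traversal (`true` = forward). -/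
abbrev D := Y.E × Bool

/-- The initial vertex of a dart. -/
def dTail (d : Y.D) : Y.V := if d.2 then Y.src d.1 else Y.dst d.1

/-- The terminal vertex of a dart. -/
def dHead (d : Y.D) : Y.V := if d.2 then Y.dst d.1 else Y.src d.1

/-- The reversal of a dart. -/
def dRev (d : Y.D) : Y.D := (d.1, !d.2)

/-- The signed letter read by a dart. -/
def dLet (d : Y.D) : Letter g := (Y.lab d.1, d.2)

/-- The word read along a list of darts. -/
def wordOf (l : List Y.D) : List (Letter g) := l.map Y.dLet

/-- The reversed walk. -/
def revW (l : List Y.D) : List Y.D := (l.map Y.dRev).reverse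

/-- `WalkFrom u v l` : `l` is a walk (edge-path) from `u` to `v`. -/
inductive WalkFrom : Y.V → Y.V → List Y.D → Prop
  | nil (v : Y.V) : WalkFrom v v []
  | cons (d : Y.D) {v : Y.V} {l : List Y.D} :
      WalkFrom (Y.dHead d) v l → WalkFrom (Y.dTail d) v (d :: l)

/-- All darts of `l` use edges from the set `sE`. -/
def InSet (sE : Set Y.E) (l : List Y.D) : Prop := ∀ d ∈ l, d.1 ∈ sE

/-- Two darts are adjacent (can be traversed consecutively). -/
def adj (d d' : Y.D) : Prop := Y.dHead d = Y.dTail d'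

/-- A nonempty closed walk. -/
def IsCycle (c : List Y.D) : Prop := c ≠ [] ∧ ∃ v, Y.WalkFrom v v c

/-- **P1**: at most one incoming and at most one outgoing `ℓ`-labeled edge at every
vertex, for every label `ℓ`. -/
def P1 : Prop :=
  (∀ e e' : Y.E, Y.src e = Y.src e' → Y.lab e = Y.lab e' → e = e') ∧
  (∀ e e' : Y.E, Y.dst e = Y.dst e' → Y.lab e = Y.lab e' → e = e')

/-- **P2**: every walk reading a word equal to `1` in `Γ_g` is closed. -/
def P2 : Prop :=
  ∀ (u v : Y.V) (l : List Y.D), Y.WalkFrom u v l → wordG (Y.wordOf l) = 1 → u = v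

/-- **P3**: every 2-cell is glued along a closed walk reading the relator
`[a₁,b₁]⋯[a_g,b_g]`, and every such closed walk bounds at most one 2-cell. -/
def P3 : Prop :=
  (∀ f : Y.F, (∃ v, Y.WalkFrom v v (Y.bdry f)) ∧ Y.wordOf (Y.bdry f) = relatorWord g) ∧
  Function.Injective Y.bdry

/-- A combinatorial covering space of `Σ_g`: every vertex has exactly one outgoing
and one incoming edge of each label, every walk reading the relator is closed, and
every closed walk reading the relator bounds exactly one `4g`-gon. -/
def IsCovering : Prop :=
  Y.P1 ∧ Y.P3 ∧
  (∀ (v : Y.V) (ℓ : Fin (2 * g)), ∃ e, Y.src e = v ∧ Y.lab e = ℓ) ∧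
  (∀ (v : Y.V) (ℓ : Fin (2 * g)), ∃ e, Y.dst e = v ∧ Y.lab e = ℓ) ∧
  (∀ (u v : Y.V) (l : List Y.D), Y.WalkFrom u v l → Y.wordOf l = relatorWord g → u = v) ∧
  (∀ (v : Y.V) (l : List Y.D), Y.WalkFrom v v l → Y.wordOf l = relatorWord g →
    ∃ f, Y.bdry f = l)

end Complex

/-- A morphism of labeled complexes: maps cells to cells of the same dimension and
respects sources, targets, labels and face boundaries (equivalently, commutes with
the immersions to `Σ_g`). -/
structure Hom {g : ℕ} (Y Z : Complex g) where
  mV : Y.V → Z.V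
  mE : Y.E → Z.E
  mF : Y.F → Z.F
  hsrc : ∀ e, Z.src (mE e) = mV (Y.src e)
  hdst : ∀ e, Z.dst (mE e) = mV (Y.dst e)
  hlab : ∀ e, Z.lab (mE e) = Y.lab e
  hbdry : ∀ f, Z.bdry (mF f) = (Y.bdry f).map fun d => (mE d.1, d.2)

namespace Hom

variable {g : ℕ} {Y Z : Complex g}

/-- The induced map on darts. -/
def mD (φ : Hom Y Z) (d : Y.D) : Z.D := (φ.mE d.1, d.2)

/-- Injectivity (an embedding of complexes). -/
def Inj (φ : Hom Y Z) : Prop :=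
  Function.Injective φ.mV ∧ Function.Injective φ.mE ∧ Function.Injective φ.mF

end Hom

namespace Complex

variable {g : ℕ} (Y : Complex g)

/-- A tiled surface: a complex which embeds into a combinatorial covering space of
`Σ_g` (compatibly with directions and labels). -/
def IsTiledSurface : Prop :=
  ∃ Z : Complex g, Z.IsCovering ∧ ∃ φ : Hom Y Z, φ.Inj

/-- Connectivity of a complex (any two vertices are joined by a walk). -/
def Connected : Prop := Nonempty Y.V ∧ ∀ v w : Y.V, ∃ l, Y.WalkFrom v w l

/-! ### Blocks and chains -/

/-- A block: a nonempty walk such that successive darts have no half-edges between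
them (hence it reads a subword of the cyclic relator, of length at most `4g`). -/
def IsBlock (l : List Y.D) : Prop :=
  l ≠ [] ∧ l.length ≤ 4 * g ∧
  List.Chain' (fun d d' => Y.adj d d' ∧ gapN (Y.dLet d) (Y.dLet d') = 0) l

/-- Two blocks are consecutive: concatenation is a walk and there is exactly one
half-edge between the last dart of the first and the first dart of the second. -/
def chainStep (b b' : List Y.D) : Prop :=
  ∃ d d', b.getLast? = some d ∧ b'.head? = some d' ∧ Y.adj d d' ∧
    gapN (Y.dLet d) (Y.dLet d') = 1

/-- A chain: a nonempty sequence of consecutive blocks. -/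
def IsChain (bs : List (List Y.D)) : Prop :=
  bs ≠ [] ∧ (∀ b ∈ bs, Y.IsBlock b) ∧ List.Chain' Y.chainStep bs

/-- A cyclic chain: a chain whose blocks pave an entire cycle. -/
def IsCyclicChain (bs : List (List Y.D)) : Prop :=
  Y.IsChain bs ∧ ∃ b b', bs.getLast? = some b ∧ bs.head? = some b' ∧ Y.chainStep b b'

/-- A long chain: a chain of consecutive blocks of lengths `2g, 2g−1, …, 2g−1, 2g`. -/
def IsLongChain (bs : List (List Y.D)) : Prop :=
  Y.IsChain bs ∧ ∃ k, bs.map List.length = 2 * g :: (List.replicate k (2 * g - 1) ++ [2 * g])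

/-- A half-chain: a cyclic chain all of whose blocks have length `2g − 1`. -/
def IsHalfChain (bs : List (List Y.D)) : Prop :=
  Y.IsCyclicChain bs ∧ ∀ b ∈ bs, b.length = 2 * g - 1

/-! ### Boundary cycles of the thick version (relative to sets of present edges and
faces), via the ribbon structure -/

/-- `nextD sE d d'`: among darts (with edge in `sE`) leaving the head of `d`, the
dart `d'` is the first one in clockwise order after the arrival half-edge of `d`.
This is the successor map whose orbits trace the boundary components of the thick
version of the ribbon graph. -/
def nextD (sE : Set Y.E) (d d' : Y.D) : Prop :=
  d'.1 ∈ sE ∧ Y.adj d d' ∧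
  ∀ d'' : Y.D, d''.1 ∈ sE → Y.adj d d'' →
    gapN (Y.dLet d) (Y.dLet d') ≤ gapN (Y.dLet d) (Y.dLet d'')

/-- The corner between the consecutive darts `d, d'` is filled by a face from `sF`. -/
def faceStep (sF : Set Y.F) (d d' : Y.D) : Prop :=
  ∃ f ∈ sF, [d, d'] <:+: (Y.bdry f ++ Y.bdry f)

/-- One step along the boundary of the thick version. -/
def bStep (sE : Set Y.E) (sF : Set Y.F) (d d' : Y.D) : Prop :=
  d.1 ∈ sE ∧ Y.nextD sE d d' ∧ ¬ Y.faceStep sF d d'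

/-- A (finite segment of a) boundary cycle of the thick version. -/
def BPath (sE : Set Y.E) (sF : Set Y.F) (l : List Y.D) : Prop :=
  l ≠ [] ∧ Y.InSet sE l ∧ List.Chain' (Y.bStep sE sF) l

/-- A (finite) boundary cycle of the thick version. -/
def BCycle (sE : Set Y.E) (sF : Set Y.F) (l : List Y.D) : Prop :=
  Y.BPath sE sF l ∧ ∃ d d', l.getLast? = some d ∧ l.head? = some d' ∧ Y.bStep sE sF d d'

/-- A dart lying on the boundary of the thick version. -/
def IsBDart (sE : Set Y.E) (sF : Set Y.F) (d : Y.D) : Prop :=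
  d.1 ∈ sE ∧ ∃ d', Y.nextD sE d d' ∧ ¬ Y.faceStep sF d d'

/-- Boundary reduced: no boundary cycle contains a long block (length `≥ 2g+1`) or
a long chain. -/
def BoundaryReduced (sE : Set Y.E) (sF : Set Y.F) : Prop :=
  (∀ l, Y.BPath sE sF l → ¬ (Y.IsBlock l ∧ 2 * g + 1 ≤ l.length)) ∧
  (∀ bs, Y.IsLongChain bs → ¬ Y.BPath sE sF bs.flatten)

/-- Strongly boundary reduced: no boundary cycle contains a half-block (length
exactly `2g`) or a half-chain. -/
def StronglyBoundaryReduced (sE : Set Y.E) (sF : Set Y.F) : Prop :=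
  (∀ l, Y.BPath sE sF l → ¬ (Y.IsBlock l ∧ l.length = 2 * g)) ∧
  (∀ bs, Y.IsHalfChain bs → ¬ Y.BCycle sE sF bs.flatten)

/-! ### Combinatorial homotopy of walks -/

/-- A closed walk traversing the boundary of a face from `sF` (in either direction,
starting anywhere). -/
def faceLoop (sF : Set Y.F) (b : List Y.D) : Prop :=
  ∃ f ∈ sF, ∃ n, b = (Y.bdry f).rotate n ∨ b = Y.revW ((Y.bdry f).rotate n)

/-- Elementary homotopy move: insertion of a backtrack or of a face boundary. -/
def elemMove (sE : Set Y.E) (sF : Set Y.F) (l l' : List Y.D) : Prop :=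
  (∃ (l₁ l₂ : List Y.D) (d : Y.D), d.1 ∈ sE ∧ l = l₁ ++ l₂ ∧ l' = l₁ ++ d :: Y.dRev d :: l₂) ∨
  (∃ l₁ l₂ b, Y.faceLoop sF b ∧ l = l₁ ++ l₂ ∧ l' = l₁ ++ b ++ l₂)

/-- Homotopy (rel endpoints) of walks from `u` to `v`, inside the subcomplex with
edge set `sE` and face set `sF`. -/
def Homotopic (sE : Set Y.E) (sF : Set Y.F) (u v : Y.V) (c c' : List Y.D) : Prop :=
  Relation.EqvGen
    (fun a b =>
      Y.WalkFrom u v a ∧ Y.WalkFrom u v b ∧ Y.InSet sE a ∧ Y.InSet sE b ∧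
        (Y.elemMove sE sF a b ∨ Y.elemMove sE sF b a)) c c'

/-- A closed walk which is null-homotopic. -/
def NullHomotopic (sE : Set Y.E) (sF : Set Y.F) (c : List Y.D) : Prop :=
  ∃ v, Y.WalkFrom v v c ∧ Y.Homotopic sE sF v v c []

/-- An essential cycle: a nonempty closed walk which is not null-homotopic. -/
def Essential (sE : Set Y.E) (sF : Set Y.F) (c : List Y.D) : Prop :=
  Y.IsCycle c ∧ Y.InSet sE c ∧ ¬ Y.NullHomotopic sE sF c

/-- Free homotopy of closed walks. -/
def FreelyHomotopic (sE : Set Y.E) (sF : Set Y.F) (c c' : List Y.D) : Prop :=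
  ∃ u v q, Y.WalkFrom u u c ∧ Y.WalkFrom v v c' ∧ Y.WalkFrom u v q ∧
    Y.InSet sE q ∧ Y.InSet sE c ∧ Y.InSet sE c' ∧
    Y.Homotopic sE sF u u c (q ++ c' ++ Y.revW q)

/-- `c` is a shortest representative of its free homotopy class. -/
def ShortestRep (sE : Set Y.E) (sF : Set Y.F) (c : List Y.D) : Prop :=
  ∀ c', Y.FreelyHomotopic sE sF c c' → c.length ≤ c'.length

end Complex

/-- `s` occurs as a contiguous subword of the cyclic word `c`. -/
def cycContains {α : Type*} (c s : List α) : Prop :=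
  s ≠ [] ∧ s.length ≤ c.length ∧ s <:+: (c ++ c)

namespace Complex

variable {g : ℕ} (Y : Complex g)

/-- The cycle `c` contains no long block and no long chain. -/
def NoLongBlockOrChainCyc (c : List Y.D) : Prop :=
  (∀ s, cycContains c s → ¬ (Y.IsBlock s ∧ 2 * g + 1 ≤ s.length)) ∧
  (∀ bs, Y.IsLongChain bs → ¬ cycContains c bs.flatten)

/-- A (cyclically) non-backtracking cycle. -/
def NonBacktrackingCyc (c : List Y.D) : Prop :=
  ¬ ∃ d : Y.D, cycContains c [d, Y.dRev d]

/-- A cycle which is essential and a shortest representative of its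
free homotopy class. -/
def GoodCycle (c : List Y.D) : Prop :=
  Y.IsCycle c ∧ Y.Essential Set.univ Set.univ c ∧ Y.ShortestRep Set.univ Set.univ c

/-! ### Cells and components of complements -/

/-- The cells of a complex. -/
def Cell := Y.V ⊕ Y.E ⊕ Y.F

def vCell (v : Y.V) : Y.Cell := Sum.inl v
def eCell (e : Y.E) : Y.Cell := Sum.inr (Sum.inl e)
def fCell (f : Y.F) : Y.Cell := Sum.inr (Sum.inr f)

/-- Basic incidence of (open) cells. -/
def inc0 : Y.Cell → Y.Cell → Prop := fun c c' =>
  match c, c' with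
  | Sum.inl v, Sum.inr (Sum.inl e) => Y.src e = v ∨ Y.dst e = v
  | Sum.inl v, Sum.inr (Sum.inr f) => ∃ d ∈ Y.bdry f, Y.dTail d = v
  | Sum.inr (Sum.inl e), Sum.inr (Sum.inr f) => ∃ b, (e, b) ∈ Y.bdry f
  | _, _ => False

/-- Symmetrized incidence of cells. -/
def incid (c c' : Y.Cell) : Prop := Y.inc0 c c' ∨ Y.inc0 c' c

end Complex

/-- A triple of subsets of the cells of a complex `Y` (a prospective subcomplex). -/
structure SubC {g : ℕ} (Y : Complex g) where
  sV : Set Y.V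
  sE : Set Y.E
  sF : Set Y.F

namespace SubC

variable {g : ℕ} {Y : Complex g}

/-- `S` is an actual subcomplex: closed under taking boundaries of cells. -/
def IsSub (S : SubC Y) : Prop :=
  (∀ e ∈ S.sE, Y.src e ∈ S.sV ∧ Y.dst e ∈ S.sV) ∧
  (∀ f ∈ S.sF, ∀ d ∈ Y.bdry f, d.1 ∈ S.sE)

/-- Containment of subcomplexes. -/
def le (S T : SubC Y) : Prop := S.sV ⊆ T.sV ∧ S.sE ⊆ T.sE ∧ S.sF ⊆ T.sF

/-- Compactness: finitely many cells. -/
def Compact (S : SubC Y) : Prop := S.sV.Finite ∧ S.sE.Finite ∧ S.sF.Finite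

/-- Connectivity of the subcomplex. -/
def Connected (S : SubC Y) : Prop :=
  S.sV.Nonempty ∧ ∀ v ∈ S.sV, ∀ w ∈ S.sV, ∃ l, Y.WalkFrom v w l ∧ Y.InSet S.sE l

/-- Image of a subcomplex under a morphism. -/
def image {Z : Complex g} (φ : Hom Y Z) (S : SubC Y) : SubC Z :=
  ⟨φ.mV '' S.sV, φ.mE '' S.sE, φ.mF '' S.sF⟩

end SubC

/-- The whole complex, as a subcomplex of itself. -/
def fullSub {g : ℕ} (Y : Complex g) : SubC Y := ⟨Set.univ, Set.univ, Set.univ⟩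

namespace Complex

variable {g : ℕ} (Y : Complex g)

/-- Membership of a cell in a subcomplex. -/
def inSub (S : SubC Y) : Y.Cell → Prop := fun c =>
  match c with
  | Sum.inl v => v ∈ S.sV
  | Sum.inr (Sum.inl e) => e ∈ S.sE
  | Sum.inr (Sum.inr f) => f ∈ S.sF

/-- Reachability of cells through the open complement of the subcomplex `S`
(= lying in the same connected component of the complement). -/
def reachS (S : SubC Y) (c c' : Y.Cell) : Prop :=
  Relation.ReflTransGen (fun a b => Y.incid a b ∧ ¬ Y.inSub S a ∧ ¬ Y.inSub S b) c c'

end Complex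

/-- The closure (as a subcomplex) of the connected component of the cell `c₀` in the
complement of the subcomplex `S`. -/
def compCl {g : ℕ} (Y : Complex g) (S : SubC Y) (c₀ : Y.Cell) : SubC Y :=
  let cF : Set Y.F := {f | Y.reachS S c₀ (Y.fCell f)}
  let cE : Set Y.E :=
    {e | Y.reachS S c₀ (Y.eCell e)} ∪ {e | ∃ f ∈ cF, ∃ b, (e, b) ∈ Y.bdry f}
  let cV : Set Y.V :=
    {v | Y.reachS S c₀ (Y.vCell v)} ∪ {v | ∃ e ∈ cE, Y.src e = v ∨ Y.dst e = v}
  ⟨cV, cE, cF⟩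

/-- The subcomplex has exactly one boundary cycle (which covers all boundary darts). -/
def OneBdry {g : ℕ} (Y : Complex g) (S : SubC Y) : Prop :=
  ∃ δ, Y.BCycle S.sE S.sF δ ∧ ∀ d, Y.IsBDart S.sE S.sF d → d ∈ δ

/-- The subcomplex has exactly two (disjoint) boundary cycles, covering all
boundary darts. -/
def TwoBdry {g : ℕ} (Y : Complex g) (S : SubC Y) : Prop :=
  ∃ δ₁ δ₂, Y.BCycle S.sE S.sF δ₁ ∧ Y.BCycle S.sE S.sF δ₂ ∧ δ₁.Disjoint δ₂ ∧
    ∀ d, Y.IsBDart S.sE S.sF d → d ∈ δ₁ ∨ d ∈ δ₂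

/-- The boundary-reduced closure of `S` inside `Y`: the intersection of all
intermediate boundary reduced subcomplexes. -/
def BRcl {g : ℕ} (Y : Complex g) (S : SubC Y) : SubC Y where
  sV := ⋂ T ∈ {T : SubC Y | T.IsSub ∧ S.le T ∧ Y.BoundaryReduced T.sE T.sF}, T.sV
  sE := ⋂ T ∈ {T : SubC Y | T.IsSub ∧ S.le T ∧ Y.BoundaryReduced T.sE T.sF}, T.sE
  sF := ⋂ T ∈ {T : SubC Y | T.IsSub ∧ S.le T ∧ Y.BoundaryReduced T.sE T.sF}, T.sF

/-- The strongly-boundary-reduced closure of `S` inside `Y`. -/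
def SBRcl {g : ℕ} (Y : Complex g) (S : SubC Y) : SubC Y where
  sV := ⋂ T ∈ {T : SubC Y | T.IsSub ∧ S.le T ∧ Y.StronglyBoundaryReduced T.sE T.sF}, T.sV
  sE := ⋂ T ∈ {T : SubC Y | T.IsSub ∧ S.le T ∧ Y.StronglyBoundaryReduced T.sE T.sF}, T.sE
  sF := ⋂ T ∈ {T : SubC Y | T.IsSub ∧ S.le T ∧ Y.StronglyBoundaryReduced T.sE T.sF}, T.sF

/-- An isomorphism between the subcomplex `S` of `Y` and the subcomplex `T` of `Z`. -/
structure SubEquiv {g : ℕ} (Y : Complex g) (S : SubC Y) (Z : Complex g) (T : SubC Z) where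
  fV : Y.V → Z.V
  fE : Y.E → Z.E
  fF : Y.F → Z.F
  bijV : Set.BijOn fV S.sV T.sV
  bijE : Set.BijOn fE S.sE T.sE
  bijF : Set.BijOn fF S.sF T.sF
  hsrc : ∀ e ∈ S.sE, Z.src (fE e) = fV (Y.src e)
  hdst : ∀ e ∈ S.sE, Z.dst (fE e) = fV (Y.dst e)
  hlab : ∀ e ∈ S.sE, Z.lab (fE e) = Y.lab e
  hbdry : ∀ f ∈ S.sF, Z.bdry (fF f) = (Y.bdry f).map fun d => (fE d.1, d.2)

/-- `FunnelComponent Y S c₀`: the connected component of the cell `c₀` in the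
complement of the subcomplex `S` is a twice-punctured sphere with one funnel and
one fake-puncture.  Rendered combinatorially: the component contains infinitely
many `4g`-gons (the funnel); there is a boundary cycle `δ` of `S` adjacent to the
component, it is unique (one fake-puncture), and every closed walk inside the
closure of the component is freely homotopic there to a power of `δ` or of its
inverse (so the closure is a half-open annulus bounded by `δ`). -/
def FunnelComponent {g : ℕ} (Y : Complex g) (S : SubC Y) (c₀ : Y.Cell) : Prop :=
  {f : Y.F | Y.reachS S c₀ (Y.fCell f)}.Infinite ∧
  ∃ δ : List Y.D, Y.BCycle S.sE S.sF δ ∧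
    (∃ d ∈ δ, ∃ c', Y.incid (Y.eCell d.1) c' ∧ Y.reachS S c₀ c') ∧
    (∀ δ', Y.BCycle S.sE S.sF δ' →
      (∃ d ∈ δ', ∃ c', Y.incid (Y.eCell d.1) c' ∧ Y.reachS S c₀ c') →
      ∃ n, δ' = δ.rotate n) ∧
    (∀ (v : Y.V) (l : List Y.D), Y.WalkFrom v v l →
      Y.InSet ({e | Y.reachS S c₀ (Y.eCell e)} ∪ {e | ∃ b, (e, b) ∈ δ}) l →
      ∃ n,
        Y.FreelyHomotopic ({e | Y.reachS S c₀ (Y.eCell e)} ∪ {e | ∃ b, (e, b) ∈ δ})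
          {f | Y.reachS S c₀ (Y.fCell f)} l ((List.replicate n δ).flatten) ∨
        Y.FreelyHomotopic ({e | Y.reachS S c₀ (Y.eCell e)} ∪ {e | ∃ b, (e, b) ∈ δ})
          {f | Y.reachS S c₀ (Y.fCell f)} l ((List.replicate n (Y.revW δ)).flatten))

/-- `Y` contains a funnel: an essential cycle `δ` of `Y` cutting off an infinite
region of `Y` which is attached to the rest of `Y` only along `δ`, contains no
boundary of `Y`, and is a half-open annulus (every loop inside is freely homotopic
to a power of `δ`); i.e. an end of `Y` which is a puncture of the ambient covering. -/
def HasFunnel {g : ℕ} (Y : Complex g) : Prop :=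
  ∃ (δ : List Y.D) (sE : Set Y.E) (sF : Set Y.F),
    Y.IsCycle δ ∧ Y.Essential Set.univ Set.univ δ ∧
    (∀ d ∈ δ, d.1 ∉ sE) ∧ sE.Nonempty ∧ sF.Infinite ∧
    (∀ f ∈ sF, ∀ d ∈ Y.bdry f, d.1 ∈ sE ∨ ∃ b, (d.1, b) ∈ δ) ∧
    (∀ f : Y.F, (∃ d ∈ Y.bdry f, d.1 ∈ sE) → f ∈ sF) ∧
    (∀ d : Y.D, d.1 ∈ sE → ¬ Y.IsBDart Set.univ Set.univ d) ∧
    (∀ v : Y.V, (∃ e ∈ sE, Y.src e = v ∨ Y.dst e = v) → (∀ d ∈ δ, Y.dTail d ≠ v) →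
      ∀ e' : Y.E, (Y.src e' = v ∨ Y.dst e' = v) → e' ∈ sE) ∧
    (∀ (v : Y.V) (l : List Y.D), Y.WalkFrom v v l →
      Y.InSet (sE ∪ {e | ∃ b, (e, b) ∈ δ}) l →
      ∃ n,
        Y.FreelyHomotopic (sE ∪ {e | ∃ b, (e, b) ∈ δ}) sF l
          ((List.replicate n δ).flatten) ∨
        Y.FreelyHomotopic (sE ∪ {e | ∃ b, (e, b) ∈ δ}) sF l
          ((List.replicate n (Y.revW δ)).flatten))

/-- The fundamental group of `Y` is cyclic: some closed walk `c` generates all free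
homotopy classes of loops.  (For a connected surface this is *equivalent to NOT
having genus ≥ 1 or at least 3 boundary components/punctures*.) -/
def CyclicPi1 {g : ℕ} (Y : Complex g) : Prop :=
  ∃ c : List Y.D, ∀ (v : Y.V) (l : List Y.D), Y.WalkFrom v v l →
    ∃ n,
      Y.FreelyHomotopic Set.univ Set.univ l ((List.replicate n c).flatten) ∨
      Y.FreelyHomotopic Set.univ Set.univ l ((List.replicate n (Y.revW c)).flatten)

/-! ### The covering space `J\~Σ_g` and the core surface of `J` -/

/-- Right cosets `Jx` of `J` in `Γ_g` — the vertices (and faces) of `J\~Σ_g`. -/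
abbrev Cos (g : ℕ) (J : Subgroup (Gamma g)) := Quotient (QuotientGroup.rightRel J)

/-- The coset `Jx`. -/
def mkCos (g : ℕ) (J : Subgroup (Gamma g)) (x : Gamma g) : Cos g J :=
  Quotient.mk _ x

/-- Right multiplication on right cosets. -/
def rmul (g : ℕ) (J : Subgroup (Gamma g)) (x : Gamma g) : Cos g J → Cos g J :=
  Quotient.map (· * x) (by
    intro a b hab
    have h1 : b * a⁻¹ ∈ J := QuotientGroup.rightRel_apply.mp hab
    refine QuotientGroup.rightRel_apply.mpr ?_
    have h2 : b * x * (a * x)⁻¹ = b * a⁻¹ := by group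
    rw [h2]; exact h1)

/-- The walk in `J\~Σ_g` starting at a vertex and reading a given word. -/
def relWalk (g : ℕ) (J : Subgroup (Gamma g)) :
    Cos g J → List (Letter g) → List ((Cos g J × Fin (2 * g)) × Bool)
  | _, [] => []
  | v, (ℓ, true) :: w =>
      ((v, ℓ), true) :: relWalk g J (rmul g J (PresentedGroup.of ℓ) v) w
  | v, (ℓ, false) :: w =>
      ((rmul g J (PresentedGroup.of ℓ)⁻¹ v, ℓ), false) ::
        relWalk g J (rmul g J (PresentedGroup.of ℓ)⁻¹ v) w

/-- The covering space `Υ = J\~Σ_g` of `Σ_g` corresponding to the subgroup `J`,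
with the CW-structure pulled back from `Σ_g`: vertices and `4g`-gons are the right
cosets of `J`, and each vertex carries one outgoing edge per label. -/
def cover (g : ℕ) (J : Subgroup (Gamma g)) : Complex g where
  V := Cos g J
  E := Cos g J × Fin (2 * g)
  F := Cos g J
  src e := e.1
  dst e := rmul g J (PresentedGroup.of e.2) e.1
  lab e := e.2
  bdry v := relWalk g J v (relatorWord g)

/-- The map `J₁\~Σ_g → J₂\~Σ_g` on vertices, for `J₁ ≤ J₂`. -/
def coverMapV {g : ℕ} {J₁ J₂ : Subgroup (Gamma g)} (h : J₁ ≤ J₂) :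
    Cos g J₁ → Cos g J₂ :=
  Quotient.map id (by
    intro a b hab
    have h1 : b * a⁻¹ ∈ J₁ := QuotientGroup.rightRel_apply.mp hab
    exact QuotientGroup.rightRel_apply.mpr (h h1))

/-- The natural covering morphism on edges. -/
def coverMapE {g : ℕ} {J₁ J₂ : Subgroup (Gamma g)} (h : J₁ ≤ J₂)
    (e : (cover g J₁).E) : (cover g J₂).E :=
  (coverMapV h e.1, e.2)

/-- The natural covering morphism on darts. -/
def coverMapD {g : ℕ} {J₁ J₂ : Subgroup (Gamma g)} (h : J₁ ≤ J₂)
    (d : (cover g J₁).D) : (cover g J₂).D :=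
  (coverMapE h d.1, d.2)

/-- The cycle `c` in `J\~Σ_g` represents the conjugacy class of `γ` in `J`
(conjugacy classes in `J` ↔ free homotopy classes of essential loops in `J\~Σ_g`). -/
def RepCls {g : ℕ} (J : Subgroup (Gamma g)) (c : List ((cover g J).D))
    (γ : Gamma g) : Prop :=
  ∃ x j : Gamma g, j ∈ J ∧
    (cover g J).WalkFrom (mkCos g J x) (mkCos g J x) c ∧
    x * wordG ((cover g J).wordOf c) * x⁻¹ = j * γ * j⁻¹

/-- Step (i) of the definition of the core surface: the edges lying on some
shortest representative cycle of an essential free homotopy class. -/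
def coreE1 (g : ℕ) (J : Subgroup (Gamma g)) : Set (cover g J).E :=
  {e | ∃ c, (cover g J).GoodCycle c ∧ ∃ b, (e, b) ∈ c}

/-- The vertices of step (i) of the definition of the core surface. -/
def coreV1 (g : ℕ) (J : Subgroup (Gamma g)) : Set (cover g J).V :=
  {v | ∃ e ∈ coreE1 g J, (cover g J).src e = v ∨ (cover g J).dst e = v}

/-- Step (i) of the definition of the core surface, as a subcomplex of `J\~Σ_g`. -/
def coreS1 (g : ℕ) (J : Subgroup (Gamma g)) : SubC (cover g J) :=
  ⟨coreV1 g J, coreE1 g J, ∅⟩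

/-- A cell of `J\~Σ_g` lying in a connected component of the complement of step (i)
which contains only finitely many `4g`-gons. -/
def coreFin (g : ℕ) (J : Subgroup (Gamma g)) (c : (cover g J).Cell) : Prop :=
  ¬ (cover g J).inSub (coreS1 g J) c ∧
  {f : (cover g J).F | (cover g J).reachS (coreS1 g J) c ((cover g J).fCell f)}.Finite

open Classical in
/-- The core surface `Core(J)` of a subgroup `J ≤ Γ_g`, as a subcomplex of
`Υ = J\~Σ_g`: (i) the union of all shortest representative cycles of essential
free homotopy classes in `Υ`, together with (ii) all connected components of the
complement containing finitely many `4g`-gons.  For the trivial subgroup it is a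
single vertex. -/
def coreSub (g : ℕ) (J : Subgroup (Gamma g)) : SubC (cover g J) :=
  if J = ⊥ then ⟨{mkCos g J 1}, ∅, ∅⟩
  else
    ⟨coreV1 g J ∪ {v | coreFin g J ((cover g J).vCell v)},
     coreE1 g J ∪ {e | coreFin g J ((cover g J).eCell e)},
     {f | coreFin g J ((cover g J).fCell f)}⟩

/-!
Compactness is clear when `Υ = J\~Σ_g` has finitely many vertices; suppose it has infinitely many.

Every edge of `Υ` has a face on its left and a face on its right, and going around the vertices
shows that the resulting dual graph is connected, so that `∂₂` is injective on cellular chains.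
Since `J` is finitely generated, there is a finite set of edges `E₀` such that every `1`-cycle is
homologous to one supported on `E₀`. Comparing ranks, and since `g ≥ 2`, every finite region of `Υ`
containing `E₀` satisfies the isoperimetric inequality `#faces ≤ 2 * #(exposed sides) + #E₀`.
Hence some finite region `K ⊇ E₀` minimises `2 * #(exposed sides) - #faces`. Summing the
comparisons of `K` with its enlargements by the level sets of a function on the faces, a
layer-cake argument shows that outside `K` a chain can strictly decrease its `ℓ¹`-norm by a
boundary.

A shortest essential cycle of `Υ` lifts to the cyclic cover of its homotopy class `γ`, where its
chain has minimal `ℓ¹`-norm among the `1`-cycles that do not bound: a minimal such cycle is carried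
by a simple closed walk, and the holonomy of a closed walk of the cyclic cover depends only on its
homology class. Comparing with a homologous loop carried by `E₀`, it follows that the shortest
cycle cannot leave `K`, so that step (i) of the construction of `Core(J)` yields a finite graph.
Finally, by connectedness of the dual graph, every component of its complement with finitely many
faces has a face adjacent to this graph, so there are finitely many such components.
-/

/-! ### Integral chains -/

section Chains

variable {α : Type*}

/-- The `ℓ¹`-norm of a finitely supported integral chain. -/
def l1Norm (z : α →₀ ℤ) : ℕ := z.sum fun _ n => n.natAbs

theorem l1Norm_eq_sum {z : α →₀ ℤ} {s : Finset α} (h : z.support ⊆ s) :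
    l1Norm z = ∑ a ∈ s, (z a).natAbs :=
  Finsupp.sum_of_support_subset z h _ fun _ _ => rfl

@[simp] theorem l1Norm_eq_zero {z : α →₀ ℤ} : l1Norm z = 0 ↔ z = 0 := by
  simp [l1Norm, Finsupp.sum, ← Finsupp.support_eq_empty, Finset.eq_empty_iff_forall_notMem]

theorem l1Norm_add_le (y z : α →₀ ℤ) : l1Norm (y + z) ≤ l1Norm y + l1Norm z := by
  classical
  rw [l1Norm_eq_sum Finsupp.support_add, l1Norm_eq_sum Finset.subset_union_left,
    l1Norm_eq_sum (z := z) Finset.subset_union_right, ← Finset.sum_add_distrib]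
  exact Finset.sum_le_sum fun a _ => Int.natAbs_add_le _ _

/-- The `1`-chain of a dart, i.e. of an edge `d.1` that is traversed forwards if `d.2 = true` and
backwards otherwise. -/
def dartChain (d : α × Bool) : α →₀ ℤ := Finsupp.single d.1 (if d.2 then 1 else -1)

@[simp] theorem dartChain_true (e : α) : dartChain (e, true) = Finsupp.single e 1 := rfl

@[simp] theorem dartChain_false (e : α) : dartChain (e, false) = -Finsupp.single e 1 :=
  Finsupp.single_neg e 1

/-- The `1`-chain of a list of darts. -/
def walkChain (L : List (α × Bool)) : α →₀ ℤ := (L.map dartChain).sum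

@[simp] theorem walkChain_nil : walkChain ([] : List (α × Bool)) = 0 := rfl

@[simp] theorem walkChain_cons (d : α × Bool) (L : List (α × Bool)) :
    walkChain (d :: L) = dartChain d + walkChain L := by simp [walkChain]

@[simp] theorem walkChain_append (L L' : List (α × Bool)) :
    walkChain (L ++ L') = walkChain L + walkChain L' := by simp [walkChain]

theorem exists_mem_of_walkChain_ne_zero {L : List (α × Bool)} {e : α} (h : walkChain L e ≠ 0) :
    ∃ b, (e, b) ∈ L := by
  induction L with
  | nil => simp at h
  | cons d L ih =>
    by_cases hd : d.1 = e
    · exact ⟨d.2, by simp [← hd]⟩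
    · obtain ⟨b, hb⟩ := ih (by simpa [dartChain, hd] using h)
      exact ⟨b, List.mem_cons_of_mem d hb⟩

@[simp] theorem l1Norm_dartChain (d : α × Bool) : l1Norm (dartChain d) = 1 := by
  rw [l1Norm, dartChain, Finsupp.sum_single_index rfl]
  split_ifs <;> rfl

theorem l1Norm_walkChain_le (L : List (α × Bool)) : l1Norm (walkChain L) ≤ L.length := by
  induction L with
  | nil => simp
  | cons d L ih =>
    have := l1Norm_add_le (dartChain d) (walkChain L)
    simp only [walkChain_cons, List.length_cons, l1Norm_dartChain] at this ⊢
    omega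

/-- A dart is positive for `z` if `z` traverses its edge in the direction of the dart. -/
def IsPositiveDart (z : α →₀ ℤ) (d : α × Bool) : Prop := if d.2 then 0 < z d.1 else z d.1 < 0

@[simp] theorem isPositiveDart_true {z : α →₀ ℤ} {e : α} :
    IsPositiveDart z (e, true) ↔ 0 < z e := by simp [IsPositiveDart]

@[simp] theorem isPositiveDart_false {z : α →₀ ℤ} {e : α} :
    IsPositiveDart z (e, false) ↔ z e < 0 := by simp [IsPositiveDart]

theorem IsPositiveDart.ne_zero {z : α →₀ ℤ} {d : α × Bool} (h : IsPositiveDart z d) :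
    z d.1 ≠ 0 := by
  rcases d with ⟨e, _ | _⟩
  · exact (isPositiveDart_false.1 h).ne
  · exact (isPositiveDart_true.1 h).ne'

theorem IsPositiveDart.sign_eq {z : α →₀ ℤ} {e : α} {b b' : Bool} (h : IsPositiveDart z (e, b))
    (h' : IsPositiveDart z (e, b')) : b = b' := by
  cases b <;> cases b' <;> simp at h h' ⊢ <;> omega

theorem exists_isPositiveDart {z : α →₀ ℤ} (hz : z ≠ 0) : ∃ d, IsPositiveDart z d := by
  obtain ⟨e, he⟩ := Finsupp.ne_iff.1 hz
  rcases lt_or_gt_of_ne he with h | h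
  · exact ⟨(e, false), isPositiveDart_false.2 h⟩
  · exact ⟨(e, true), isPositiveDart_true.2 h⟩

theorem finite_isPositiveDart (z : α →₀ ℤ) : {d | IsPositiveDart z d}.Finite :=
  (z.support ×ˢ (Finset.univ : Finset Bool)).finite_toSet.subset fun _ hd => by
    simpa using hd.ne_zero

theorem l1Norm_sub_dartChain {z : α →₀ ℤ} {d : α × Bool} (h : IsPositiveDart z d) :
    l1Norm (z - dartChain d) + 1 = l1Norm z := by
  classical
  have hd : d.1 ∈ z.support := Finsupp.mem_support_iff.2 h.ne_zero
  have hsupp : (z - dartChain d).support ⊆ z.support :=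
    Finsupp.support_sub.trans (Finset.union_subset subset_rfl
      (Finsupp.support_single_subset.trans (Finset.singleton_subset_iff.2 hd)))
  have hoff : ∀ e ∈ z.support.erase d.1, ((z - dartChain d) e).natAbs = (z e).natAbs := by
    intro e he
    simp [dartChain, (Finset.ne_of_mem_erase he).symm]
  have hon : ((z - dartChain d) d.1).natAbs + 1 = (z d.1).natAbs := by
    rcases d with ⟨e, _ | _⟩ <;> simp [dartChain] at h ⊢ <;> omega
  rw [l1Norm_eq_sum hsupp, l1Norm_eq_sum subset_rfl, ← Finset.add_sum_erase _ _ hd,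
    ← Finset.add_sum_erase _ _ hd, Finset.sum_congr rfl hoff]
  omega

theorem l1Norm_sub_walkChain {z : α →₀ ℤ} {L : List (α × Bool)} (hL : L.Nodup)
    (h : ∀ d ∈ L, IsPositiveDart z d) : l1Norm (z - walkChain L) + L.length = l1Norm z := by
  induction L with
  | nil => simp
  | cons d L ih =>
    rw [List.nodup_cons] at hL
    have hd := h d List.mem_cons_self
    have hoff : walkChain L d.1 = 0 := by
      by_contra hne
      obtain ⟨b, hb⟩ := exists_mem_of_walkChain_ne_zero hne
      have hbd : b = d.2 := (h _ (List.mem_cons_of_mem d hb)).sign_eq hd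
      exact hL.1 (by rwa [hbd] at hb)
    have hpos : IsPositiveDart (z - walkChain L) d := by
      simpa [IsPositiveDart, hoff] using hd
    have := ih hL.2 fun d hd => h d (List.mem_cons_of_mem _ hd)
    have := l1Norm_sub_dartChain hpos
    rw [walkChain_cons, List.length_cons, add_comm (dartChain d), ← sub_sub]
    omega

theorem dartChain_not (d : α × Bool) : dartChain (d.1, !d.2) = -dartChain d := by
  rcases d with ⟨e, _ | _⟩ <;> simp

theorem walkChain_ne_zero_of_l1Norm_eq_length {L : List (α × Bool)}
    (h : l1Norm (walkChain L) = L.length) {d : α × Bool} (hd : d ∈ L) : walkChain L d.1 ≠ 0 := by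
  classical
  intro h0
  have hL : walkChain L = dartChain d + walkChain (L.erase d) := by
    rw [← walkChain_cons]
    exact ((List.perm_cons_erase hd).map dartChain).sum_eq
  have hpos : IsPositiveDart (walkChain (L.erase d)) (d.1, !d.2) := by
    rw [hL, Finsupp.add_apply] at h0
    rcases d with ⟨e, _ | _⟩ <;> simp at h0 ⊢ <;> omega
  have hdrop := l1Norm_sub_dartChain hpos
  rw [dartChain_not, sub_neg_eq_add, add_comm (walkChain _), ← hL, h] at hdrop
  have := l1Norm_walkChain_le (L.erase d)
  have := List.length_erase_of_mem hd
  omega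

end Chains

/-! ### Chains and walks of a complex -/

namespace Complex

variable {g : ℕ} {Y : Complex g}

@[simp] theorem dTail_true (e : Y.E) : Y.dTail (e, true) = Y.src e := rfl
@[simp] theorem dTail_false (e : Y.E) : Y.dTail (e, false) = Y.dst e := rfl
@[simp] theorem dHead_true (e : Y.E) : Y.dHead (e, true) = Y.dst e := rfl
@[simp] theorem dHead_false (e : Y.E) : Y.dHead (e, false) = Y.src e := rfl

theorem WalkFrom.append {u v w : Y.V} {l l' : List Y.D} (h : Y.WalkFrom u v l)
    (h' : Y.WalkFrom v w l') : Y.WalkFrom u w (l ++ l') := by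
  induction h with
  | nil => exact h'
  | cons d _ ih => exact .cons d (ih h')

theorem walkFrom_singleton (d : Y.D) : Y.WalkFrom (Y.dTail d) (Y.dHead d) [d] := .cons d (.nil _)

theorem walkFrom_map_range {f : ℕ → Y.D} (hf : ∀ n, Y.dTail (f (n + 1)) = Y.dHead (f n)) (n : ℕ) :
    Y.WalkFrom (Y.dTail (f 0)) (Y.dTail (f n)) ((List.range n).map f) := by
  induction n with
  | zero => exact .nil _
  | succ n ih =>
    rw [List.range_succ, List.map_append, hf n]
    exact ih.append (walkFrom_singleton (f n))

theorem revW_append (l l' : List Y.D) : Y.revW (l ++ l') = Y.revW l' ++ Y.revW l := by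
  simp [revW]

theorem walkChain_revW (l : List Y.D) : walkChain (Y.revW l) = -walkChain l := by
  induction l with
  | nil => simp [revW]
  | cons d l ih =>
    have hcons : Y.revW (d :: l) = Y.revW l ++ [Y.dRev d] := revW_append [d] l
    have hd : dartChain (Y.dRev d) = -dartChain d := dartChain_not d
    simp [hcons, ih, hd]

variable (Y) in
/-- The cellular boundary map from `1`-chains to `0`-chains. -/
def boundary₁ : (Y.E →₀ ℤ) →ₗ[ℤ] (Y.V →₀ ℤ) :=
  Finsupp.linearCombination ℤ fun e => Finsupp.single (Y.dst e) 1 - Finsupp.single (Y.src e) 1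

variable (Y) in
/-- The cellular boundary map from `2`-chains to `1`-chains. -/
def boundary₂ : (Y.F →₀ ℤ) →ₗ[ℤ] (Y.E →₀ ℤ) :=
  Finsupp.linearCombination ℤ fun f => walkChain (Y.bdry f)

variable (Y) in
/-- The `1`-cycles of a complex. -/
def cycles : Submodule ℤ (Y.E →₀ ℤ) := LinearMap.ker Y.boundary₁

variable (Y) in
/-- The `1`-boundaries of a complex. -/
def boundaries : Submodule ℤ (Y.E →₀ ℤ) := LinearMap.range Y.boundary₂

@[simp] theorem boundary₁_single (e : Y.E) (n : ℤ) : Y.boundary₁ (Finsupp.single e n) =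
    n • (Finsupp.single (Y.dst e) 1 - Finsupp.single (Y.src e) 1) :=
  Finsupp.linearCombination_single ℤ n e

@[simp] theorem boundary₂_single (f : Y.F) (n : ℤ) :
    Y.boundary₂ (Finsupp.single f n) = n • walkChain (Y.bdry f) :=
  Finsupp.linearCombination_single ℤ n f

theorem mem_cycles {z : Y.E →₀ ℤ} : z ∈ Y.cycles ↔ Y.boundary₁ z = 0 := LinearMap.mem_ker

theorem mem_cycles_of_smul_mem {k : ℤ} (hk : k ≠ 0) {z : Y.E →₀ ℤ} (h : k • z ∈ Y.cycles) :
    z ∈ Y.cycles := by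
  rw [mem_cycles, map_smul] at h
  exact (smul_eq_zero.1 h).resolve_left hk

theorem boundary₁_dartChain (d : Y.D) : Y.boundary₁ (dartChain d) =
    Finsupp.single (Y.dHead d) 1 - Finsupp.single (Y.dTail d) 1 := by
  rcases d with ⟨e, _ | _⟩ <;> simp

theorem WalkFrom.boundary₁_walkChain {u v : Y.V} {l : List Y.D} (h : Y.WalkFrom u v l) :
    Y.boundary₁ (walkChain l) = Finsupp.single v 1 - Finsupp.single u 1 := by
  induction h with
  | nil => simp
  | cons d _ ih => rw [walkChain_cons, map_add, ih, boundary₁_dartChain]; abel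

theorem WalkFrom.walkChain_mem_cycles {v : Y.V} {l : List Y.D} (h : Y.WalkFrom v v l) :
    walkChain l ∈ Y.cycles := by
  rw [mem_cycles, h.boundary₁_walkChain, sub_self]

theorem boundaries_le_cycles (h : ∀ f, ∃ v, Y.WalkFrom v v (Y.bdry f)) :
    Y.boundaries ≤ Y.cycles := by
  rw [boundaries, boundary₂, Finsupp.range_linearCombination, Submodule.span_le]
  rintro _ ⟨f, rfl⟩
  obtain ⟨v, hv⟩ := h f
  exact hv.walkChain_mem_cycles

/-! #### Homotopic walks -/

theorem elemMove.append {sE : Set Y.E} {sF : Set Y.F} {a b : List Y.D} (h : Y.elemMove sE sF a b)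
    (p q : List Y.D) : Y.elemMove sE sF (p ++ a ++ q) (p ++ b ++ q) := by
  obtain ⟨l₁, l₂, d, hd, rfl, rfl⟩ | ⟨l₁, l₂, d, hd, rfl, rfl⟩ := h
  · exact .inl ⟨p ++ l₁, l₂ ++ q, d, hd, by simp, by simp⟩
  · exact .inr ⟨p ++ l₁, l₂ ++ q, d, hd, by simp, by simp⟩

theorem Homotopic.append {s t u v : Y.V} {p q a b : List Y.D} (hp : Y.WalkFrom s u p)
    (hq : Y.WalkFrom v t q) (h : Y.Homotopic Set.univ Set.univ u v a b) :
    Y.Homotopic Set.univ Set.univ s t (p ++ a ++ q) (p ++ b ++ q) := by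
  unfold Homotopic at h ⊢
  induction h with
  | rel a b h =>
    obtain ⟨ha, hb, -, -, hmove⟩ := h
    exact .rel _ _ ⟨(hp.append ha).append hq, (hp.append hb).append hq, fun _ _ => trivial,
      fun _ _ => trivial, hmove.imp (·.append p q) (·.append p q)⟩
  | refl a => exact .refl _
  | symm a b _ ih => exact .symm _ _ ih
  | trans a b c _ _ hab hbc => exact .trans _ _ _ hab hbc

theorem faceLoop.walkChain_mem_boundaries {sF : Set Y.F} {b : List Y.D} (h : Y.faceLoop sF b) :
    walkChain b ∈ Y.boundaries := by
  have hrot : ∀ f n, walkChain ((Y.bdry f).rotate n) ∈ Y.boundaries := fun f n => by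
    rw [walkChain, (((Y.bdry f).rotate_perm n).map dartChain).sum_eq]
    exact ⟨Finsupp.single f 1, by rw [boundary₂_single, one_smul]; rfl⟩
  obtain ⟨f, -, n, rfl | rfl⟩ := h
  · exact hrot f n
  · rw [walkChain_revW]
    exact neg_mem (hrot f n)

theorem elemMove.walkChain_sub_mem_boundaries {sE : Set Y.E} {sF : Set Y.F} {a b : List Y.D}
    (h : Y.elemMove sE sF a b) : walkChain b - walkChain a ∈ Y.boundaries := by
  obtain ⟨l₁, l₂, d, -, rfl, rfl⟩ | ⟨l₁, l₂, c, hc, rfl, rfl⟩ := h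
  · have hd : dartChain (Y.dRev d) = -dartChain d := dartChain_not d
    simp [hd]
  · convert hc.walkChain_mem_boundaries using 1
    simp only [walkChain_append]
    abel

theorem Homotopic.walkChain_sub_mem_boundaries {sE : Set Y.E} {sF : Set Y.F} {u v : Y.V}
    {a b : List Y.D} (h : Y.Homotopic sE sF u v a b) :
    walkChain a - walkChain b ∈ Y.boundaries := by
  unfold Homotopic at h
  induction h with
  | rel a b h =>
    obtain ⟨-, -, -, -, hmove | hmove⟩ := h
    · simpa using neg_mem hmove.walkChain_sub_mem_boundaries
    · exact hmove.walkChain_sub_mem_boundaries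
  | refl a => simp
  | symm a b _ ih => simpa using neg_mem ih
  | trans a b c _ _ hab hbc => simpa using add_mem hab hbc

/-! #### Closed walks carried by a cycle -/

theorem boundary₁_apply (z : Y.E →₀ ℤ) (v : Y.V) [DecidableEq Y.V] : Y.boundary₁ z v =
    ∑ e ∈ z.support, z e * ((if Y.dst e = v then 1 else 0) - (if Y.src e = v then 1 else 0)) := by
  rw [boundary₁, Finsupp.linearCombination_apply, Finsupp.sum, Finsupp.finsetSum_apply]
  exact Finset.sum_congr rfl fun e _ => by simp [Finsupp.single_apply]

theorem exists_isPositiveDart_dTail_eq {z : Y.E →₀ ℤ} (hz : z ∈ Y.cycles) {d : Y.D}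
    (hd : IsPositiveDart z d) : ∃ d', IsPositiveDart z d' ∧ Y.dTail d' = Y.dHead d := by
  classical
  by_contra! hnone
  have hsrc : ∀ e, 0 < z e → Y.src e ≠ Y.dHead d := fun e he =>
    hnone (e, true) (isPositiveDart_true.2 he)
  have hdst : ∀ e, z e < 0 → Y.dst e ≠ Y.dHead d := fun e he =>
    hnone (e, false) (isPositiveDart_false.2 he)
  have hnonneg : ∀ e ∈ z.support, 0 ≤ z e *
      ((if Y.dst e = Y.dHead d then 1 else 0) - (if Y.src e = Y.dHead d then 1 else 0)) := by
    intro e _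
    rcases lt_trichotomy (z e) 0 with h | h | h
    · rw [if_neg (hdst e h)]; split_ifs <;> simp [h.le]
    · simp [h]
    · rw [if_neg (hsrc e h)]; split_ifs <;> simp [h.le]
  have hsum := boundary₁_apply z (Y.dHead d)
  rw [mem_cycles.1 hz, Finsupp.coe_zero, Pi.zero_apply] at hsum
  have hzero := (Finset.sum_eq_zero_iff_of_nonneg hnonneg).1 hsum.symm d.1
    (Finsupp.mem_support_iff.2 hd.ne_zero)
  rcases d with ⟨e, _ | _⟩
  · have he := isPositiveDart_false.1 hd
    rw [if_neg (hdst e he), dHead_false, if_pos rfl] at hzero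
    exact he.ne (by simpa using hzero)
  · have he := isPositiveDart_true.1 hd
    rw [if_neg (hsrc e he), dHead_true, if_pos rfl] at hzero
    exact he.ne' (by simpa using hzero)

end Complex

theorem exists_mem_periodicPts {α : Type*} [Finite α] [Nonempty α] (f : α → α) :
    ∃ x, x ∈ Function.periodicPts f := by
  obtain ⟨a⟩ := ‹Nonempty α›
  obtain ⟨i, j, hij, he⟩ := Finite.exists_ne_map_eq_of_infinite fun n : ℕ => f^[n] a
  wlog hlt : i < j generalizing i j
  · exact this j i hij.symm he.symm (by omega)
  refine ⟨f^[i] a, j - i, by omega, ?_⟩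
  rw [Function.IsPeriodicPt, Function.IsFixedPt, ← Function.iterate_add_apply,
    Nat.sub_add_cancel hlt.le, ← he]

namespace Complex

variable {g : ℕ} {Y : Complex g}

theorem exists_nodup_closed_walk {P : Set Y.D} (hfin : P.Finite) (hne : P.Nonempty)
    (hnext : ∀ d ∈ P, ∃ d' ∈ P, Y.dTail d' = Y.dHead d) :
    ∃ v l, l ≠ [] ∧ Y.WalkFrom v v l ∧ l.Nodup ∧ ∀ d ∈ l, d ∈ P := by
  have : Finite P := hfin.to_subtype
  have : Nonempty P := hne.to_subtype
  have hex : ∀ d : P, ∃ d' : P, Y.dTail d' = Y.dHead d := fun d => by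
    obtain ⟨d', hd', h⟩ := hnext d d.2
    exact ⟨⟨d', hd'⟩, h⟩
  choose next hnext using hex
  obtain ⟨x, hx⟩ := exists_mem_periodicPts next
  have hwalk := walkFrom_map_range (f := fun n => (next^[n] x : Y.D))
    (fun n => by rw [Function.iterate_succ_apply', hnext]) (Function.minimalPeriod next x)
  rw [Function.iterate_minimalPeriod, Function.iterate_zero, id] at hwalk
  refine ⟨_, _, ?_, hwalk, List.nodup_range.map_on fun a ha b hb hab => ?_, fun d hd => ?_⟩
  · simpa [List.map_eq_nil_iff] using (Function.minimalPeriod_pos_of_mem_periodicPts hx).ne'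
  · exact Function.iterate_injOn_Iio_minimalPeriod (List.mem_range.1 ha) (List.mem_range.1 hb)
      (Subtype.ext hab)
  · obtain ⟨i, -, rfl⟩ := List.mem_map.1 hd
    exact (next^[i] x).2

theorem exists_closed_walk_l1Norm_sub {z : Y.E →₀ ℤ} (hz : z ∈ Y.cycles) (h0 : z ≠ 0) :
    ∃ v l, l ≠ [] ∧ Y.WalkFrom v v l ∧ l1Norm (z - walkChain l) + l.length = l1Norm z := by
  obtain ⟨v, l, hne, hwalk, hnodup, hpos⟩ := exists_nodup_closed_walk (finite_isPositiveDart z)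
    (exists_isPositiveDart h0) fun _ hd => exists_isPositiveDart_dTail_eq hz hd
  exact ⟨v, l, hne, hwalk, l1Norm_sub_walkChain hnodup hpos⟩

theorem exists_walkFrom_walkChain_eq {z : Y.E →₀ ℤ} (hz : z ∈ Y.cycles) (hzB : z ∉ Y.boundaries)
    (hmin : ∀ y ∈ Y.cycles, y ∉ Y.boundaries → l1Norm z ≤ l1Norm y) :
    ∃ v l, Y.WalkFrom v v l ∧ walkChain l = z ∧ l.length = l1Norm z := by
  obtain ⟨v, l, hne, hwalk, hnorm⟩ :=
    exists_closed_walk_l1Norm_sub hz (by rintro rfl; exact hzB (zero_mem _))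
  have hpos : 0 < l.length := List.length_pos_iff.2 hne
  have hlB : walkChain l ∉ Y.boundaries := fun hl => by
    have := hmin _ (sub_mem hz hwalk.walkChain_mem_cycles) fun h =>
      hzB (by simpa using add_mem h hl)
    omega
  have hle := (hmin _ hwalk.walkChain_mem_cycles hlB).trans (l1Norm_walkChain_le l)
  exact ⟨v, l, hwalk, (sub_eq_zero.1 (l1Norm_eq_zero.1 (by omega))).symm, by omega⟩

end Complex

/-! ### Dual graphs and their chains -/

/-- The dual graph of a cell structure on a surface: every edge in `E` has a face in `F` on its left
and one on its right, and going around a face one meets exactly one edge of each type in `ι` on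
either side. -/
structure DualGraph (E F ι : Type*) where
  leftEquiv : E ≃ F × ι
  rightEquiv : E ≃ F × ι

namespace DualGraph

variable {E F ι : Type*} (D : DualGraph E F ι)

/-- The face on the left of an edge. -/
def left (e : E) : F := (D.leftEquiv e).1

/-- The face on the right of an edge. -/
def right (e : E) : F := (D.rightEquiv e).1

/-- The cellular boundary of an integral `2`-chain. -/
def boundary [Fintype ι] : (F →₀ ℤ) →ₗ[ℤ] (E →₀ ℤ) :=
  Finsupp.linearCombination ℤ fun f => ∑ i,
    (Finsupp.single (D.leftEquiv.symm (f, i)) 1 - Finsupp.single (D.rightEquiv.symm (f, i)) 1)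

theorem sum_single_symm_apply [Fintype ι] (φ : E ≃ F × ι) (f : F) (e : E) :
    ∑ i, Finsupp.single (φ.symm (f, i)) (1 : ℤ) e = Finsupp.single f 1 (φ e).1 := by
  classical
  simp only [Finsupp.single_apply, Equiv.symm_apply_eq, Prod.ext_iff, ite_and]
  by_cases h : f = (φ e).1 <;> simp [h]

@[simp] theorem boundary_apply [Fintype ι] (A : F →₀ ℤ) (e : E) :
    D.boundary A e = A (D.left e) - A (D.right e) := by
  induction A using Finsupp.induction_linear with
  | zero => simp
  | add A B hA hB =>
    rw [map_add, Finsupp.add_apply, hA, hB, Finsupp.add_apply, Finsupp.add_apply]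
    ring
  | single f n =>
    rw [boundary, Finsupp.linearCombination_single, Finsupp.smul_apply, Finsupp.finsetSum_apply]
    simp only [Finsupp.sub_apply, Finset.sum_sub_distrib, sum_single_symm_apply]
    rw [← Finsupp.smul_single_one f n]
    simp only [Finsupp.smul_apply, smul_eq_mul, mul_sub]
    rfl

end DualGraph

/-! ### Shortest cycles are primitive -/

theorem sum_range_add_ediv {q : ℕ} (hq : q ≠ 0) (m : ℤ) :
    ∑ j ∈ Finset.range q, (m + j) / (q : ℤ) = m := by
  have hstep (m : ℤ) : ∑ j ∈ Finset.range q, (m + 1 + j) / (q : ℤ) =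
      ∑ j ∈ Finset.range q, (m + j) / (q : ℤ) + 1 := by
    have htel := Finset.sum_range_sub (fun j : ℕ => (m + j) / (q : ℤ)) q
    rw [Finset.sum_sub_distrib, Int.add_ediv_of_dvd_right dvd_rfl,
      Int.ediv_self (Nat.cast_ne_zero.2 hq), Nat.cast_zero, add_zero] at htel
    simp only [Nat.cast_add, Nat.cast_one, ← add_assoc, add_right_comm m _ 1] at htel
    linarith
  induction m using Int.induction_on with
  | zero =>
    refine Finset.sum_eq_zero fun j hj => ?_
    rw [zero_add]
    exact Int.ediv_eq_zero_of_lt (by positivity) (by exact_mod_cast Finset.mem_range.1 hj)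
  | succ i ih => rw [hstep, ih]
  | pred i ih =>
    have := hstep (-(i : ℤ) - 1)
    rw [sub_add_cancel, ih] at this
    linarith

theorem add_one_ediv_sub_ediv {q : ℤ} (hq : 0 < q) (m : ℤ) :
    (m + 1) / q - m / q = if q ∣ m + 1 then 1 else 0 := by
  rw [sub_eq_iff_eq_add, Int.ediv_eq_iff_of_pos hq]
  have hdiv := Int.mul_ediv_add_emod m q
  have hnonneg := Int.emod_nonneg m hq.ne'
  have hlt := Int.emod_lt_of_pos m hq
  split_ifs with h
  · have hmod : m % q = q - 1 := by
      have h' : q ∣ m % q + 1 := by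
        rw [← Int.dvd_add_right (dvd_mul_right q (m / q)), ← add_assoc, hdiv]; exact h
      have := Int.le_of_dvd (by omega) h'
      omega
    constructor <;> linarith
  · have hmod : m % q ≠ q - 1 := fun hc => h ⟨m / q + 1, by linarith⟩
    have : m % q + 1 < q := by omega
    constructor <;> linarith

section Slices

variable {E F ι : Type*} (D : DualGraph E F ι)

/-- The slices of a `1`-chain `z` along a `2`-chain `N`: the `j`-th one is
`⌊(N (right e) + z e + j) / q⌋ - ⌊(N (right e) + j) / q⌋`. The `q` slices add up to `z` without
cancellation. -/
def slice (q : ℕ) (N : F →₀ ℤ) (z : E →₀ ℤ) (j : ℕ) : E →₀ ℤ :=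
  Finsupp.onFinset z.support
    (fun e => (N (D.right e) + z e + j) / (q : ℤ) - (N (D.right e) + j) / (q : ℤ))
    fun e he => Finsupp.mem_support_iff.2 fun hz => he (by simp [hz])

theorem sum_slice_apply {q : ℕ} (hq : q ≠ 0) (N : F →₀ ℤ) (z : E →₀ ℤ) (e : E) :
    ∑ j ∈ Finset.range q, slice D q N z j e = z e := by
  simp only [slice, Finsupp.onFinset_apply, Finset.sum_sub_distrib, sum_range_add_ediv hq,
    add_sub_cancel_left]

theorem sum_slice {q : ℕ} (hq : q ≠ 0) (N : F →₀ ℤ) (z : E →₀ ℤ) :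
    ∑ j ∈ Finset.range q, slice D q N z j = z := by
  ext e
  rw [Finsupp.finsetSum_apply, sum_slice_apply D hq]

theorem natAbs_sum_of_nonneg_or_nonpos {κ : Type*} {s : Finset κ} {f : κ → ℤ}
    (h : (∀ j ∈ s, 0 ≤ f j) ∨ ∀ j ∈ s, f j ≤ 0) :
    (∑ j ∈ s, f j).natAbs = ∑ j ∈ s, (f j).natAbs := by
  zify
  rcases h with h | h
  · rw [abs_of_nonneg (Finset.sum_nonneg h)]
    exact Finset.sum_congr rfl fun j hj => (abs_of_nonneg (h j hj)).symm
  · rw [abs_of_nonpos (Finset.sum_nonpos h), ← Finset.sum_neg_distrib]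
    exact Finset.sum_congr rfl fun j hj => (abs_of_nonpos (h j hj)).symm

theorem sum_l1Norm_slice {q : ℕ} (hq : q ≠ 0) (N : F →₀ ℤ) (z : E →₀ ℤ) :
    ∑ j ∈ Finset.range q, l1Norm (slice D q N z j) = l1Norm z := by
  have hq' : (0 : ℤ) < q := by positivity
  have hsign (e : E) : (∀ j ∈ Finset.range q, 0 ≤ slice D q N z j e) ∨
      ∀ j ∈ Finset.range q, slice D q N z j e ≤ 0 := by
    simp only [slice, Finsupp.onFinset_apply, sub_nonneg, sub_nonpos]
    rcases le_total 0 (z e) with h | h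
    · exact Or.inl fun j _ => Int.ediv_le_ediv hq' (by omega)
    · exact Or.inr fun j _ => Int.ediv_le_ediv hq' (by omega)
  simp only [fun j => l1Norm_eq_sum (z := slice D q N z j) Finsupp.support_onFinset_subset]
  rw [Finset.sum_comm, l1Norm_eq_sum subset_rfl]
  exact Finset.sum_congr rfl fun e _ => by
    rw [← natAbs_sum_of_nonneg_or_nonpos (hsign e), sum_slice_apply D hq]

theorem slice_succ_sub_mem_range_boundary [Fintype ι] {q j : ℕ} (hj : j + 1 < q) {N : F →₀ ℤ}
    {z : E →₀ ℤ} (hz : ∀ e, (q : ℤ) ∣ z e - D.boundary N e) :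
    slice D q N z (j + 1) - slice D q N z j ∈ LinearMap.range D.boundary := by
  have hq : (0 : ℤ) < q := by omega
  refine ⟨Finsupp.onFinset N.support (fun f => if (q : ℤ) ∣ N f + j + 1 then 1 else 0) ?_, ?_⟩
  · intro f hf
    rw [Finsupp.mem_support_iff]
    intro h0
    rw [h0, zero_add] at hf
    have hdvd : (q : ℤ) ∣ j + 1 := by simpa using hf
    have := Int.le_of_dvd (by omega) hdvd
    omega
  · ext e
    have hdvd : (q : ℤ) ∣ N (D.right e) + z e + j + 1 ↔ (q : ℤ) ∣ N (D.left e) + j + 1 := by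
      have := hz e
      rw [D.boundary_apply] at this
      rw [← dvd_add_right this (c := N (D.left e) + j + 1)]
      ring_nf
    have hleft := add_one_ediv_sub_ediv hq (N (D.right e) + z e + j)
    have hright := add_one_ediv_sub_ediv hq (N (D.right e) + j)
    simp only [hdvd] at hleft
    simp only [D.boundary_apply, Finsupp.sub_apply, slice, Finsupp.onFinset_apply, ← hleft,
      ← hright, Nat.cast_add, Nat.cast_one, ← add_assoc]
    ring

theorem slice_sub_mem_range_boundary [Fintype ι] {q j : ℕ} (hj : j < q) {N : F →₀ ℤ}
    {z : E →₀ ℤ} (hz : ∀ e, (q : ℤ) ∣ z e - D.boundary N e) :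
    slice D q N z j - slice D q N z 0 ∈ LinearMap.range D.boundary := by
  induction j with
  | zero => simp
  | succ j ih =>
    simpa using add_mem (slice_succ_sub_mem_range_boundary D hj hz) (ih (by omega))

theorem natAbs_le_one_of_forall_l1Norm_le [Fintype ι] {Z : Submodule ℤ (E →₀ ℤ)}
    (hBZ : LinearMap.range D.boundary ≤ Z) (hdiv : ∀ k : ℤ, k ≠ 0 → ∀ y, k • y ∈ Z → y ∈ Z)
    {z : E →₀ ℤ} (hz : z ∈ Z) (hzB : z ∉ LinearMap.range D.boundary)
    (hmin : ∀ y ∈ Z, y ∉ LinearMap.range D.boundary → l1Norm z ≤ l1Norm y)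
    {k : ℤ} {c : E →₀ ℤ} {N : F →₀ ℤ} (h : z = k • c + D.boundary N) : k.natAbs ≤ 1 := by
  by_contra! hk
  set q := k.natAbs with hqk
  have hq : q ≠ 0 := by omega
  have hdvd (e : E) : (q : ℤ) ∣ z e - D.boundary N e := by
    rw [h, Finsupp.add_apply, add_sub_cancel_right, hqk]
    exact (Int.natAbs_dvd.2 dvd_rfl).mul_right _
  have hcongr (j) (hj : j ∈ Finset.range q) :=
    slice_sub_mem_range_boundary D (Finset.mem_range.1 hj) hdvd
  have hmul : z - (q : ℤ) • slice D q N z 0 ∈ LinearMap.range D.boundary := by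
    simpa [Finset.sum_sub_distrib, sum_slice D hq] using Submodule.sum_mem _ hcongr
  have hZ : slice D q N z 0 ∈ Z :=
    hdiv q (Nat.cast_ne_zero.2 hq) _ (by simpa using sub_mem hz (hBZ hmul))
  have hB : slice D q N z 0 ∉ LinearMap.range D.boundary := fun hc =>
    hzB (by simpa using add_mem hmul (Submodule.smul_mem _ (q : ℤ) hc))
  have hle : ∀ j ∈ Finset.range q, l1Norm z ≤ l1Norm (slice D q N z j) := fun j hj =>
    hmin _ (by simpa using add_mem (hBZ (hcongr j hj)) hZ)
      fun hc => hB (by simpa using sub_mem hc (hcongr j hj))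
  have hsum := Finset.card_nsmul_le_sum _ _ _ hle
  rw [sum_l1Norm_slice D hq, Finset.card_range, smul_eq_mul] at hsum
  have h0 : l1Norm z = 0 := by nlinarith
  exact hzB (l1Norm_eq_zero.1 h0 ▸ zero_mem _)

end Slices

/-! ### Minimal regions -/

namespace DualGraph

variable {E F ι : Type*}

/-- A finite region of a cell structure on a surface: a finite set of edges and faces that contains
every edge of its faces. -/
structure Region (D : DualGraph E F ι) where
  edges : Finset E
  faces : Finset F
  mem_edges_of_left : ∀ {e}, D.left e ∈ faces → e ∈ edges
  mem_edges_of_right : ∀ {e}, D.right e ∈ faces → e ∈ edges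

section Touched

variable [Fintype ι] (D : DualGraph E F ι)

open Classical in
/-- The edges of the faces in a finite set. -/
def touched (Y : Finset F) : Finset E :=
  (Y ×ˢ Finset.univ).image D.leftEquiv.symm ∪ (Y ×ˢ Finset.univ).image D.rightEquiv.symm

@[simp] theorem mem_touched {Y : Finset F} {e : E} :
    e ∈ D.touched Y ↔ D.left e ∈ Y ∨ D.right e ∈ Y := by
  simp [touched, Equiv.symm_apply_eq, left, right]

end Touched

namespace Region

variable {D : DualGraph E F ι}

open Classical in
/-- The number of exposed sides of a region, a side of an edge being exposed if the face on this
side does not belong to the region. -/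
def exposed (K : D.Region) : ℕ :=
  ∑ e ∈ K.edges, ((if D.left e ∈ K.faces then 0 else 1) + if D.right e ∈ K.faces then 0 else 1)

/-- A region is minimal if no larger region has a smaller value of `2 * exposed - #faces`. -/
def IsMinimal (K : D.Region) : Prop :=
  ∀ L : D.Region, K.edges ⊆ L.edges → K.faces ⊆ L.faces →
    2 * K.exposed + L.faces.card ≤ 2 * L.exposed + K.faces.card

theorem exists_isMinimal {E₀ : Finset E} {b : ℕ}
    (hb : ∀ K : D.Region, E₀ ⊆ K.edges → K.faces.card ≤ 2 * K.exposed + b) :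
    ∃ K : D.Region, E₀ ⊆ K.edges ∧ K.IsMinimal := by
  let excess (K : D.Region) : ℕ := 2 * K.exposed + b - K.faces.card
  obtain ⟨K, hK, hmin⟩ := (measure excess).wf.has_min {K | E₀ ⊆ K.edges}
    ⟨⟨E₀, ∅, by simp, by simp⟩, Finset.Subset.refl E₀⟩
  refine ⟨K, hK, fun L hKL _ => ?_⟩
  have hle : ¬ excess L < excess K := hmin L (hK.trans hKL)
  have := hb K hK
  have := hb L (hK.trans hKL)
  simp only [excess] at hle
  omega

open Classical in
theorem sum_union_add_eq_exposed (K : D.Region) {Y : Finset F} (hY : Disjoint K.faces Y) :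
    ∑ e ∈ K.edges, (((if D.left e ∈ K.faces ∪ Y then 0 else 1) +
        if D.right e ∈ K.faces ∪ Y then 0 else 1) +
        ((if D.left e ∈ Y then 1 else 0) + if D.right e ∈ Y then 1 else 0)) = K.exposed := by
  refine Finset.sum_congr rfl fun e _ => ?_
  have hdisj : ∀ f ∈ K.faces, f ∉ Y := fun f hf hf' => Finset.disjoint_left.1 hY hf hf'
  have := hdisj (D.left e)
  have := hdisj (D.right e)
  by_cases h₁ : D.left e ∈ K.faces <;> by_cases h₂ : D.right e ∈ K.faces <;>
    by_cases h₃ : D.left e ∈ Y <;> by_cases h₄ : D.right e ∈ Y <;> simp_all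

variable [Fintype ι]

open Classical in
/-- The region obtained from `K` by adjoining a finite set of faces and their edges. -/
def adjoin (K : D.Region) (Y : Finset F) : D.Region where
  edges := K.edges ∪ D.touched Y
  faces := K.faces ∪ Y
  mem_edges_of_left h := by
    rw [Finset.mem_union] at h ⊢
    exact h.imp K.mem_edges_of_left fun h => D.mem_touched.2 (Or.inl h)
  mem_edges_of_right h := by
    rw [Finset.mem_union] at h ⊢
    exact h.imp K.mem_edges_of_right fun h => D.mem_touched.2 (Or.inr h)

open Classical in
theorem exposed_adjoin_outer (K : D.Region) {Y : Finset F} {e : E}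
    (he : e ∈ D.touched Y \ K.edges) :
    ((if D.left e ∈ K.faces ∪ Y then 0 else 1) + if D.right e ∈ K.faces ∪ Y then 0 else 1 : ℤ) =
      |(if D.left e ∈ Y then 1 else 0) - if D.right e ∈ Y then 1 else 0| := by
  rw [Finset.mem_sdiff, D.mem_touched] at he
  have hl : D.left e ∉ K.faces := fun h => he.2 (K.mem_edges_of_left h)
  have hr : D.right e ∉ K.faces := fun h => he.2 (K.mem_edges_of_right h)
  by_cases h₃ : D.left e ∈ Y <;> by_cases h₄ : D.right e ∈ Y <;> simp_all

open Classical in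
theorem exposed_adjoin_le (K : D.Region) {Y : Finset F} (hY : Disjoint K.faces Y) {T : Finset E}
    (hT : ∀ e ∈ D.touched Y, e ∉ K.edges → e ∈ T) :
    ((K.adjoin Y).exposed : ℤ) + ∑ e ∈ K.edges,
        ((if D.left e ∈ Y then 1 else 0) + if D.right e ∈ Y then 1 else 0) ≤
      K.exposed + ∑ e ∈ T, |(if D.left e ∈ Y then 1 else 0) - if D.right e ∈ Y then 1 else 0| := by
  have hsplit : (K.adjoin Y).exposed =
      ∑ e ∈ K.edges, ((if D.left e ∈ K.faces ∪ Y then 0 else 1) +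
        if D.right e ∈ K.faces ∪ Y then 0 else 1) +
      ∑ e ∈ D.touched Y \ K.edges, ((if D.left e ∈ K.faces ∪ Y then 0 else 1) +
        if D.right e ∈ K.faces ∪ Y then 0 else 1) := by
    rw [← Finset.sum_union Finset.disjoint_sdiff, Finset.union_sdiff_self_eq_union]
    rfl
  have hsub : D.touched Y \ K.edges ⊆ T := fun e he =>
    hT e (Finset.mem_sdiff.1 he).1 (Finset.mem_sdiff.1 he).2
  have hle := Finset.sum_le_sum_of_subset_of_nonneg hsub fun e _ _ =>
    abs_nonneg ((if D.left e ∈ Y then 1 else 0) - (if D.right e ∈ Y then 1 else 0) : ℤ)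
  rw [← Finset.sum_congr rfl fun e he => K.exposed_adjoin_outer he] at hle
  rw [← K.sum_union_add_eq_exposed hY, hsplit]
  push_cast
  simp only [Finset.sum_add_distrib] at hle ⊢
  linarith

open Classical in
theorem IsMinimal.level_inequality {K : D.Region} (hK : K.IsMinimal) {Y : Finset F}
    (hY : Disjoint K.faces Y) {T : Finset E} (hT : ∀ e ∈ D.touched Y, e ∉ K.edges → e ∈ T) :
    2 * ∑ e ∈ K.edges, ((if D.left e ∈ Y then 1 else 0) + if D.right e ∈ Y then 1 else 0) +
        (Y.card : ℤ) ≤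
      2 * ∑ e ∈ T, |(if D.left e ∈ Y then 1 else 0) - if D.right e ∈ Y then 1 else 0| := by
  have hmin := hK (K.adjoin Y) Finset.subset_union_left Finset.subset_union_left
  have hcard : (K.adjoin Y).faces.card = K.faces.card + Y.card := Finset.card_union_of_disjoint hY
  have := K.exposed_adjoin_le hY hT
  rw [hcard] at hmin
  zify at hmin
  linarith

end Region

end DualGraph

theorem sum_range_ite_lt {M n : ℕ} (h : n ≤ M) :
    ∑ t ∈ Finset.range M, (if t < n then 1 else 0 : ℤ) = n := by
  rw [Finset.sum_boole, Nat.cast_inj,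
    show (Finset.range M).filter (· < n) = Finset.range n by ext; simp; omega, Finset.card_range]

theorem sum_range_abs_ite_lt_sub {M m n : ℕ} (hm : m ≤ M) (hn : n ≤ M) :
    ∑ t ∈ Finset.range M, |(if t < m then 1 else 0 : ℤ) - if t < n then 1 else 0| =
      |(m : ℤ) - n| := by
  wlog hmn : n ≤ m generalizing m n
  · simp_rw [abs_sub_comm (if _ < m then _ else _ : ℤ), abs_sub_comm (m : ℤ)]
    exact this hn hm (by omega)
  have hterm (t : ℕ) : |(if t < m then 1 else 0 : ℤ) - if t < n then 1 else 0| =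
      (if t < m then 1 else 0) - if t < n then 1 else 0 := by
    apply abs_of_nonneg
    split_ifs <;> omega
  simp_rw [hterm]
  rw [Finset.sum_sub_distrib, sum_range_ite_lt hm, sum_range_ite_lt hn, abs_of_nonneg (by omega)]

theorem DualGraph.Region.IsMinimal.functional_inequality {E F ι : Type*} [Fintype ι]
    {D : DualGraph E F ι} {K : D.Region} (hK : K.IsMinimal) {N : F →₀ ℕ}
    (hN : Disjoint K.faces N.support) {T : Finset E}
    (hT : ∀ e ∈ D.touched N.support, e ∉ K.edges → e ∈ T) :
    2 * ∑ e ∈ K.edges, ((N (D.left e) : ℤ) + N (D.right e)) + ∑ f ∈ N.support, (N f : ℤ) ≤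
      2 * ∑ e ∈ T, |(N (D.left e) : ℤ) - N (D.right e)| := by
  classical
  set M := N.support.sup N
  have hM (f : F) : N f ≤ M := by
    by_cases hf : f ∈ N.support
    · exact Finset.le_sup hf
    · simp [Finsupp.notMem_support_iff.1 hf]
  let Y (t : ℕ) : Finset F := N.support.filter (t < N ·)
  have hmem (t : ℕ) (f : F) : f ∈ Y t ↔ t < N f := by
    simp only [Y, Finset.mem_filter, Finsupp.mem_support_iff]
    omega
  have hcard (t : ℕ) : ((Y t).card : ℤ) = ∑ f ∈ N.support, if t < N f then 1 else 0 := by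
    rw [Finset.sum_boole]
  have hlevel (t : ℕ) := hK.level_inequality (Y := Y t) (T := T)
    (hN.mono_right (Finset.filter_subset _ _)) fun e he => hT e <| by
      rw [D.mem_touched] at he ⊢
      exact he.imp (Finset.mem_filter.1 · |>.1) (Finset.mem_filter.1 · |>.1)
  simp only [hmem, hcard] at hlevel
  have hsum := Finset.sum_le_sum fun t (_ : t ∈ Finset.range M) => hlevel t
  simp only [← Finset.mul_sum, Finset.sum_add_distrib] at hsum
  rw [Finset.sum_comm, Finset.sum_comm (t := K.edges), Finset.sum_comm (t := N.support),
    Finset.sum_comm (t := T)] at hsum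
  simpa only [sum_range_ite_lt (hM _), sum_range_abs_ite_lt_sub (hM _) (hM _),
    ← Finset.sum_add_distrib] using hsum

namespace DualGraph

section Push

variable {F F' : Type*}

/-- The pushforward of the absolute value of an integral chain along a map of faces. -/
def pushAbs (p : F' → F) (R : F' →₀ ℤ) : F →₀ ℕ :=
  (R.mapRange Int.natAbs Int.natAbs_zero).mapDomain p

open Classical in
theorem pushAbs_apply (p : F' → F) (R : F' →₀ ℤ) (f : F) :
    (pushAbs p R f : ℤ) = ∑ u ∈ R.support with p u = f, |R u| := by
  rw [pushAbs, Finsupp.mapDomain, Finsupp.sum_apply, Finsupp.sum_mapRange_index (by simp),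
    Finsupp.sum, Finset.sum_filter, Nat.cast_sum]
  refine Finset.sum_congr rfl fun u _ => ?_
  by_cases h : p u = f <;> simp [h]

theorem exists_of_mem_support_pushAbs {p : F' → F} {R : F' →₀ ℤ} {f : F}
    (h : f ∈ (pushAbs p R).support) : ∃ u ∈ R.support, p u = f := by
  classical
  obtain ⟨u, hu, rfl⟩ := Finset.mem_image.1 (Finsupp.mapDomain_support h)
  exact ⟨u, Finsupp.support_mapRange hu, rfl⟩

theorem sum_support_pushAbs (p : F' → F) (R : F' →₀ ℤ) :
    ∑ f ∈ (pushAbs p R).support, pushAbs p R f = l1Norm R := by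
  change (pushAbs p R).sum (fun _ n => n) = _
  rw [pushAbs, Finsupp.sum_mapDomain_index (fun _ => rfl) (fun _ _ _ => rfl),
    Finsupp.sum_mapRange_index (fun _ => rfl)]
  rfl

end Push

open Classical in
theorem sum_fiber_abs {E F E' F' ι : Type*} {φ : E ≃ F × ι} {φ' : E' ≃ F' × ι} {pE : E' → E}
    {pF : F' → F} (h : ∀ e, φ (pE e) = (pF (φ' e).1, (φ' e).2)) {R : F' →₀ ℤ} {U : Finset E'}
    (hU : ∀ e, R (φ' e).1 ≠ 0 → e ∈ U) (e : E) :
    ∑ e' ∈ U with pE e' = e, |R (φ' e').1| = pushAbs pF R (φ e).1 := by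
  rw [pushAbs_apply]
  refine Finset.sum_bij_ne_zero (fun e' _ _ => (φ' e').1) ?_ ?_ ?_ fun _ _ _ => rfl
  · intro e' he' h0
    rw [Finset.mem_filter] at he' ⊢
    exact ⟨Finsupp.mem_support_iff.2 (abs_ne_zero.1 h0), by rw [← he'.2, h]⟩
  · intro a ha _ b hb _ hab
    refine φ'.injective (Prod.ext hab ?_)
    have := (h a).symm.trans ((congrArg φ ((Finset.mem_filter.1 ha).2.trans
      (Finset.mem_filter.1 hb).2.symm)).trans (h b))
    exact (Prod.ext_iff.1 this).2
  · intro u hu h0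
    rw [Finset.mem_filter] at hu
    have hmk : φ' (φ'.symm (u, (φ e).2)) = (u, (φ e).2) := φ'.apply_symm_apply _
    refine ⟨φ'.symm (u, (φ e).2), Finset.mem_filter.2 ⟨hU _ ?_, φ.injective ?_⟩, ?_, ?_⟩
    · rw [hmk]; exact abs_ne_zero.1 h0
    · rw [h, hmk, hu.2]
    · rw [hmk]; exact h0
    · rw [hmk]

/-- A covering map between cell structures on surfaces, on the level of edges and faces. -/
structure Cover {E F E' F' ι : Type*} (D' : DualGraph E' F' ι) (D : DualGraph E F ι) where
  mapEdge : E' → E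
  mapFace : F' → F
  leftEquiv_mapEdge : ∀ e,
    D.leftEquiv (mapEdge e) = (mapFace (D'.leftEquiv e).1, (D'.leftEquiv e).2)
  rightEquiv_mapEdge :
    ∀ e, D.rightEquiv (mapEdge e) = (mapFace (D'.rightEquiv e).1, (D'.rightEquiv e).2)

namespace Cover

variable {E F E' F' ι : Type*} {D' : DualGraph E' F' ι} {D : DualGraph E F ι} (π : Cover D' D)

theorem left_mapEdge (e : E') : D.left (π.mapEdge e) = π.mapFace (D'.left e) :=
  congrArg Prod.fst (π.leftEquiv_mapEdge e)

theorem right_mapEdge (e : E') : D.right (π.mapEdge e) = π.mapFace (D'.right e) :=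
  congrArg Prod.fst (π.rightEquiv_mapEdge e)

variable [Fintype ι]

open Classical in
theorem sum_fiber_abs_left {R : F' →₀ ℤ} {U : Finset E'} (hU : D'.touched R.support ⊆ U) (e : E) :
    ∑ e' ∈ U with π.mapEdge e' = e, |R (D'.left e')| = pushAbs π.mapFace R (D.left e) :=
  sum_fiber_abs π.leftEquiv_mapEdge
    (fun _ he => hU (D'.mem_touched.2 (Or.inl (Finsupp.mem_support_iff.2 he)))) e

open Classical in
theorem sum_fiber_abs_right {R : F' →₀ ℤ} {U : Finset E'} (hU : D'.touched R.support ⊆ U) (e : E) :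
    ∑ e' ∈ U with π.mapEdge e' = e, |R (D'.right e')| = pushAbs π.mapFace R (D.right e) :=
  sum_fiber_abs π.rightEquiv_mapEdge
    (fun _ he => hU (D'.mem_touched.2 (Or.inr (Finsupp.mem_support_iff.2 he)))) e

open Classical in
theorem sum_abs_add_abs {R : F' →₀ ℤ} {U : Finset E'} (hU : D'.touched R.support ⊆ U)
    (S : Finset E) :
    ∑ e ∈ U with π.mapEdge e ∈ S, (|R (D'.left e)| + |R (D'.right e)|) =
      ∑ e ∈ S, ((pushAbs π.mapFace R (D.left e) : ℤ) + pushAbs π.mapFace R (D.right e)) := by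
  rw [← Finset.sum_fiberwise_eq_sum_filter]
  exact Finset.sum_congr rfl fun e _ => by
    rw [Finset.sum_add_distrib, π.sum_fiber_abs_left hU, π.sum_fiber_abs_right hU]

open Classical in
theorem sum_abs_sub_le {R : F' →₀ ℤ} {U : Finset E'} (hU : D'.touched R.support ⊆ U)
    (S : Finset E) :
    ∑ e ∈ S, |(pushAbs π.mapFace R (D.left e) : ℤ) - pushAbs π.mapFace R (D.right e)| ≤
      ∑ e ∈ U with π.mapEdge e ∈ S, |R (D'.left e) - R (D'.right e)| := by
  rw [← Finset.sum_fiberwise_eq_sum_filter]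
  refine Finset.sum_le_sum fun e _ => ?_
  rw [← π.sum_fiber_abs_left hU, ← π.sum_fiber_abs_right hU, ← Finset.sum_sub_distrib]
  exact (Finset.abs_sum_le_sum_abs _ _).trans
    (Finset.sum_le_sum fun _ _ => abs_abs_sub_abs_le _ _)

theorem exists_mapEdge_eq_of_mem_touched_pushAbs {R : F' →₀ ℤ} {U : Finset E'}
    (hU : D'.touched R.support ⊆ U) {e : E} (he : e ∈ D.touched (pushAbs π.mapFace R).support) :
    ∃ e' ∈ U, π.mapEdge e' = e := by
  classical
  simp only [mem_touched, Finsupp.mem_support_iff, ← Nat.cast_ne_zero (R := ℤ)] at he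
  rw [← π.sum_fiber_abs_left hU, ← π.sum_fiber_abs_right hU] at he
  rcases he with h | h <;>
  · obtain ⟨e', he', -⟩ := Finset.exists_ne_zero_of_sum_ne_zero h
    exact ⟨e', Finset.mem_filter.1 he'⟩

open Classical in
theorem functional_inequality {K : D.Region} (hK : K.IsMinimal) {R : F' →₀ ℤ}
    (hR : ∀ u ∈ R.support, π.mapFace u ∉ K.faces) {U : Finset E'}
    (hU : D'.touched R.support ⊆ U) :
    2 * ∑ e ∈ U with π.mapEdge e ∈ K.edges, (|R (D'.left e)| + |R (D'.right e)|) + l1Norm R ≤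
      2 * ∑ e ∈ U with π.mapEdge e ∉ K.edges, |R (D'.left e) - R (D'.right e)| := by
  set N := pushAbs π.mapFace R
  set T := (U.filter (π.mapEdge · ∉ K.edges)).image π.mapEdge
  have hdisj : Disjoint K.faces N.support := Finset.disjoint_right.2 fun f hf => by
    obtain ⟨u, hu, rfl⟩ := exists_of_mem_support_pushAbs hf
    exact hR u hu
  have hmain := hK.functional_inequality (T := T) hdisj fun e he heK => by
    obtain ⟨e', he', rfl⟩ := π.exists_mapEdge_eq_of_mem_touched_pushAbs hU he
    exact Finset.mem_image_of_mem _ (Finset.mem_filter.2 ⟨he', heK⟩)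
  have hsub : U.filter (π.mapEdge · ∈ T) ⊆ U.filter (π.mapEdge · ∉ K.edges) := by
    intro e he
    obtain ⟨he, heT⟩ := Finset.mem_filter.1 he
    obtain ⟨e', he', heq⟩ := Finset.mem_image.1 heT
    exact Finset.mem_filter.2 ⟨he, heq ▸ (Finset.mem_filter.1 he').2⟩
  have houter := (π.sum_abs_sub_le hU T).trans
    (Finset.sum_le_sum_of_subset_of_nonneg hsub fun _ _ _ => abs_nonneg _)
  have hnorm : ∑ f ∈ N.support, (N f : ℤ) = l1Norm R := by
    exact_mod_cast sum_support_pushAbs π.mapFace R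
  rw [π.sum_abs_add_abs hU]
  linarith

open Classical in
theorem l1Norm_sub_boundary_le {K : D.Region} {c : E' →₀ ℤ} {R : F' →₀ ℤ} {U : Finset E'}
    (hc : c.support ⊆ U) (hU : D'.touched R.support ⊆ U)
    (hcR : ∀ e, π.mapEdge e ∉ K.edges → c e = D'.boundary R e) :
    (l1Norm (c - D'.boundary R) : ℤ) + ∑ e ∈ U with π.mapEdge e ∉ K.edges,
        |R (D'.left e) - R (D'.right e)| ≤
      l1Norm c +
        ∑ e ∈ U with π.mapEdge e ∈ K.edges, (|R (D'.left e)| + |R (D'.right e)|) := by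
  have hsupp : (c - D'.boundary R).support ⊆ U := by
    refine Finsupp.support_sub.trans (Finset.union_subset hc fun e he => hU ?_)
    rw [Finsupp.mem_support_iff, boundary_apply] at he
    rw [mem_touched, Finsupp.mem_support_iff, Finsupp.mem_support_iff]
    by_contra! h
    exact he (by rw [h.1, h.2, sub_zero])
  have hinner : ∑ e ∈ U with π.mapEdge e ∈ K.edges, |(c - D'.boundary R) e| ≤
      ∑ e ∈ U with π.mapEdge e ∈ K.edges, (|c e| + (|R (D'.left e)| + |R (D'.right e)|)) :=
    Finset.sum_le_sum fun e _ => by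
      rw [Finsupp.sub_apply, boundary_apply]
      exact (abs_sub _ _).trans (by gcongr; exact abs_sub _ _)
  have houter : ∑ e ∈ U with π.mapEdge e ∉ K.edges, |(c - D'.boundary R) e| = 0 :=
    Finset.sum_eq_zero fun e he => by
      rw [Finsupp.sub_apply, hcR e (Finset.mem_filter.1 he).2, sub_self, abs_zero]
  have hcout : ∑ e ∈ U with π.mapEdge e ∉ K.edges, |c e| =
      ∑ e ∈ U with π.mapEdge e ∉ K.edges, |R (D'.left e) - R (D'.right e)| :=
    Finset.sum_congr rfl fun e he => by
      rw [hcR e (Finset.mem_filter.1 he).2, boundary_apply]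
  simp only [l1Norm_eq_sum hsupp, l1Norm_eq_sum hc, Nat.cast_sum, Int.natCast_natAbs]
  rw [← Finset.sum_filter_add_sum_filter_not U (π.mapEdge · ∈ K.edges), houter,
    ← Finset.sum_filter_add_sum_filter_not U (π.mapEdge · ∈ K.edges) (|c ·|), hcout]
  rw [Finset.sum_add_distrib] at hinner
  linarith

theorem eq_zero_of_mapEdge_notMem {K : D.Region} (hK : K.IsMinimal) {c : E' →₀ ℤ} {R : F' →₀ ℤ}
    (hcR : ∀ e, π.mapEdge e ∉ K.edges → c e = D'.boundary R e)
    (hmin : ∀ A, l1Norm c ≤ l1Norm (c - D'.boundary A)) {e : E'} (he : π.mapEdge e ∉ K.edges) :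
    c e = 0 := by
  classical
  set R' := R.filter (π.mapFace · ∉ K.faces)
  have hR' : ∀ e, π.mapEdge e ∉ K.edges → c e = D'.boundary R' e := by
    intro e he
    have hl : π.mapFace (D'.left e) ∉ K.faces := fun h =>
      he (K.mem_edges_of_left (by rwa [left_mapEdge]))
    have hr : π.mapFace (D'.right e) ∉ K.faces := fun h =>
      he (K.mem_edges_of_right (by rwa [right_mapEdge]))
    rw [hcR e he, boundary_apply, boundary_apply,
      Finsupp.filter_apply_pos (π.mapFace · ∉ K.faces) _ hl,
      Finsupp.filter_apply_pos (π.mapFace · ∉ K.faces) _ hr]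
  have hpush := π.functional_inequality hK (R := R')
    (fun u hu => by simpa [R', Finsupp.support_filter] using (Finset.mem_filter.1 hu).2)
    (U := c.support ∪ D'.touched R'.support) Finset.subset_union_right
  have hle := π.l1Norm_sub_boundary_le (K := K)
    (U := c.support ∪ D'.touched R'.support) Finset.subset_union_left Finset.subset_union_right hR'
  have hc := hmin R'
  have h0 : R' = 0 := l1Norm_eq_zero.1 (by zify at *; linarith [Nat.zero_le (l1Norm R')])
  rw [hR' e he, h0, map_zero, Finsupp.zero_apply]

end Cover

end DualGraph

/-! ### Counting cells of a region -/

section Rank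

universe u

theorem rank_supported {α : Type*} (s : Finset α) :
    Module.rank ℤ (Finsupp.supported ℤ ℤ (s : Set α)) = s.card := by
  rw [(Finsupp.supportedEquivFinsupp (M := ℤ) (R := ℤ) (s : Set α)).rank_eq, rank_finsupp_self]
  simp

theorem rank_map_add_rank_inf_ker {R : Type*} {M N : Type u} [Ring R] [AddCommGroup M]
    [AddCommGroup N] [Module R M] [Module R N] [HasRankNullity.{u} R] (f : M →ₗ[R] N)
    (S : Submodule R M) :
    Module.rank R (S.map f) + Module.rank R (S ⊓ LinearMap.ker f : Submodule R M) =
      Module.rank R S := by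
  rw [← LinearMap.rank_range_add_rank_ker (f.domRestrict S), LinearMap.range_domRestrict,
    LinearMap.ker_domRestrict, ← Submodule.map_comap_subtype,
    (Submodule.equivMapOfInjective _ S.injective_subtype _).rank_eq]

end Rank

namespace DualGraph.Region

variable {E F ι : Type*} {D : DualGraph E F ι} (K : D.Region)

open Classical in
theorem card_image_left_union_image_right_le :
    (K.edges.image D.left ∪ K.edges.image D.right).card ≤ K.faces.card + K.exposed := by
  have hsub : K.edges.image D.left ∪ K.edges.image D.right ⊆ K.faces ∪
      ({e ∈ K.edges | D.left e ∉ K.faces}.image D.left ∪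
        {e ∈ K.edges | D.right e ∉ K.faces}.image D.right) := by
    intro f
    simp only [Finset.mem_union, Finset.mem_image, Finset.mem_filter]
    grind
  refine (Finset.card_le_card hsub).trans ((Finset.card_union_le _ _).trans ?_)
  gcongr
  refine (Finset.card_union_le _ _).trans ((add_le_add Finset.card_image_le
    Finset.card_image_le).trans_eq ?_)
  simp [exposed, Finset.sum_add_distrib, Finset.sum_ite, Finset.sum_const_zero]

open Classical in
theorem two_mul_card_edges [Fintype ι] :
    2 * K.edges.card = 2 * Fintype.card ι * K.faces.card + K.exposed := by
  have hside (φ : E ≃ F × ι) (hφ : ∀ e, (φ e).1 ∈ K.faces → e ∈ K.edges) :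
      K.edges.card = Fintype.card ι * K.faces.card +
        ∑ e ∈ K.edges, if (φ e).1 ∈ K.faces then 0 else 1 := by
    have hcov : {e ∈ K.edges | (φ e).1 ∈ K.faces} =
        (K.faces ×ˢ Finset.univ).map φ.symm.toEmbedding := by
      ext e
      simpa [Finset.mem_map_equiv] using hφ e
    have hcard := congrArg Finset.card hcov
    rw [Finset.card_map, Finset.card_product, Finset.card_univ] at hcard
    rw [← Finset.card_filter_add_card_filter_not (s := K.edges) fun e => (φ e).1 ∈ K.faces, hcard,
      mul_comm, Finset.card_filter]
    simp only [ite_not]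
  have hleft : K.edges.card = Fintype.card ι * K.faces.card +
      ∑ e ∈ K.edges, if D.left e ∈ K.faces then 0 else 1 :=
    hside D.leftEquiv fun _ => K.mem_edges_of_left
  have hright : K.edges.card = Fintype.card ι * K.faces.card +
      ∑ e ∈ K.edges, if D.right e ∈ K.faces then 0 else 1 :=
    hside D.rightEquiv fun _ => K.mem_edges_of_right
  rw [exposed, Finset.sum_add_distrib]
  linarith

theorem rank_comap_boundary_le {E F : Type} {D : DualGraph E F ι} (K : D.Region) [Fintype ι]
    (hD : Function.Injective D.boundary) :
    Module.rank ℤ ((Finsupp.supported ℤ ℤ (K.edges : Set E)).comap D.boundary) ≤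
      (K.faces.card + K.exposed : ℕ) := by
  classical
  set T := K.edges.image D.left ∪ K.edges.image D.right
  set U := (Finsupp.supported ℤ ℤ (K.edges : Set E)).comap D.boundary
  let ρ : U →ₗ[ℤ] T → ℤ := LinearMap.pi fun f => (Finsupp.lapply (f : F)).comp U.subtype
  have hρ : Function.Injective ρ := by
    refine (injective_iff_map_eq_zero ρ).2 fun ⟨A, hA⟩ h => ?_
    have hT : ∀ f ∈ T, A f = 0 := fun f hf => congrFun h ⟨f, hf⟩
    have hbd : D.boundary A = 0 := by
      ext e
      by_cases he : e ∈ K.edges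
      · rw [boundary_apply, hT, hT] <;> simp [T, Finset.mem_image_of_mem _ he]
      · exact Finsupp.notMem_support_iff.1 fun h => he (hA h)
    exact Subtype.ext ((injective_iff_map_eq_zero D.boundary).1 hD A hbd)
  refine (LinearMap.rank_le_of_injective ρ hρ).trans ?_
  rw [rank_fun', Fintype.card_coe]
  exact_mod_cast K.card_image_left_union_image_right_le

end DualGraph.Region

namespace Complex

variable {g : ℕ} {Y : Complex g}

open Classical in
theorem map_boundary₁_supported_le (s : Finset Y.E) :
    (Finsupp.supported ℤ ℤ (s : Set Y.E)).map Y.boundary₁ ≤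
      Finsupp.supported ℤ ℤ (s.image Y.src ∪ s.image Y.dst : Finset Y.V) := by
  rw [Finsupp.supported_eq_span_single ℤ (s : Set Y.E), Submodule.map_span, Submodule.span_le]
  rintro _ ⟨_, ⟨e, he, rfl⟩, rfl⟩
  rw [boundary₁_single, one_smul]
  refine Submodule.sub_mem _ (Finsupp.single_mem_supported _ _ ?_)
    (Finsupp.single_mem_supported _ _ ?_)
  · exact Finset.mem_union_right _ (Finset.mem_image_of_mem _ he)
  · exact Finset.mem_union_left _ (Finset.mem_image_of_mem _ he)

open Classical in
/-- The rank count behind the Euler characteristic: `E₀` accounts for the homology of `Y`. -/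
theorem card_edges_le {ι : Type*} [Fintype ι] {D : DualGraph Y.E Y.F ι}
    (hD : Function.Injective D.boundary) {E₀ : Finset Y.E}
    (hE₀ : Y.cycles ≤ LinearMap.range D.boundary ⊔ Finsupp.supported ℤ ℤ (E₀ : Set Y.E))
    (K : D.Region) (hK : E₀ ⊆ K.edges) :
    K.edges.card ≤ (K.edges.image Y.src ∪ K.edges.image Y.dst).card +
      ((K.faces.card + K.exposed) + E₀.card) := by
  set S := Finsupp.supported ℤ ℤ (K.edges : Set Y.E)
  have hE₀S : Finsupp.supported ℤ ℤ (E₀ : Set Y.E) ≤ S := Finsupp.supported_mono (mod_cast hK)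
  have hcycles : S ⊓ Y.cycles ≤
      (S.comap D.boundary).map D.boundary ⊔ Finsupp.supported ℤ ℤ (E₀ : Set Y.E) := by
    rintro z ⟨hzS, hz⟩
    obtain ⟨_, ⟨A, rfl⟩, w, hw, rfl⟩ := Submodule.mem_sup.1 (hE₀ hz)
    have hA : D.boundary A ∈ S := by simpa using S.sub_mem hzS (hE₀S hw)
    exact Submodule.add_mem_sup ⟨A, hA, rfl⟩ hw
  have hrank : Module.rank ℤ (S ⊓ Y.cycles : Submodule ℤ (Y.E →₀ ℤ)) ≤
      (K.faces.card + K.exposed : ℕ) + (E₀.card : Cardinal) := by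
    refine (Submodule.rank_mono hcycles).trans ((Submodule.rank_add_le_rank_add_rank _ _).trans ?_)
    rw [rank_supported]
    gcongr
    exact (rank_map_le _ _).trans (K.rank_comap_boundary_le hD)
  have hmap := Submodule.rank_mono (map_boundary₁_supported_le K.edges)
  have hsum := rank_map_add_rank_inf_ker Y.boundary₁ S
  rw [rank_supported] at hmap hsum
  exact_mod_cast hsum.symm.trans_le (add_le_add hmap hrank)

end Complex

/-! ### Words in the generators -/

section Words

variable {g : ℕ}

/-- The inverse of a signed letter. -/
def letterInv (l : Letter g) : Letter g := (l.1, !l.2)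

/-- The formal inverse of a word. -/
def wordInv (w : List (Letter g)) : List (Letter g) := (w.map letterInv).reverse

@[simp] theorem letterG_true (i : Fin (2 * g)) : letterG (i, true) = PresentedGroup.of i := rfl

@[simp] theorem letterG_false (i : Fin (2 * g)) : letterG (i, false) = (PresentedGroup.of i)⁻¹ :=
  rfl

@[simp] theorem letterG_letterInv (l : Letter g) : letterG (letterInv l) = (letterG l)⁻¹ := by
  rcases l with ⟨i, _ | _⟩ <;> simp [letterInv]

@[simp] theorem wordG_nil : wordG ([] : List (Letter g)) = 1 := rfl

@[simp] theorem wordG_cons (l : Letter g) (w : List (Letter g)) :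
    wordG (l :: w) = letterG l * wordG w := by
  simp [wordG]

@[simp] theorem wordG_append (w w' : List (Letter g)) :
    wordG (w ++ w') = wordG w * wordG w' := by
  simp [wordG]

theorem wordInv_cons (l : Letter g) (w : List (Letter g)) :
    wordInv (l :: w) = wordInv w ++ [letterInv l] := by
  simp [wordInv]

@[simp] theorem wordG_wordInv (w : List (Letter g)) : wordG (wordInv w) = (wordG w)⁻¹ := by
  induction w with
  | nil => simp [wordInv]
  | cons l w ih => simp [wordInv_cons, ih]

theorem wordG_surjective : Function.Surjective (wordG (g := g)) := by
  intro x
  have hx : x ∈ Subgroup.closure (Set.range PresentedGroup.of) := by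
    rw [PresentedGroup.closure_range_of]
    trivial
  induction hx using Subgroup.closure_induction with
  | mem y hy =>
    obtain ⟨i, rfl⟩ := hy
    exact ⟨[(i, true)], by simp⟩
  | one => exact ⟨[], rfl⟩
  | mul a b _ _ ha hb =>
    obtain ⟨u, rfl⟩ := ha
    obtain ⟨v, rfl⟩ := hb
    exact ⟨u ++ v, by simp⟩
  | inv a _ ha =>
    obtain ⟨u, rfl⟩ := ha
    exact ⟨wordInv u, by simp⟩

/-- The value of a word in a group `G` when the generators take the values `f`. -/
def evalWord {G : Type*} [Group G] (f : Fin (2 * g) → G) (w : List (Letter g)) : G :=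
  (w.map fun l => if l.2 then f l.1 else (f l.1)⁻¹).prod

theorem map_evalWord {G H : Type*} [Group G] [Group H] (φ : G →* H) (f : Fin (2 * g) → G)
    (w : List (Letter g)) : φ (evalWord f w) = evalWord (φ ∘ f) w := by
  simp [evalWord, map_list_prod, Function.comp_def, apply_ite φ]

theorem wordG_eq_mk_evalWord (w : List (Letter g)) :
    wordG w = PresentedGroup.mk {relatorF g} (evalWord FreeGroup.of w) :=
  (map_evalWord _ _ w).symm

@[simp] theorem wordG_relatorWord : wordG (relatorWord g) = 1 := by
  rw [wordG_eq_mk_evalWord]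
  exact PresentedGroup.one_of_mem rfl

/-- Von Dyck's theorem for monoid congruences: words with the same value in `Γ_g` are congruent
as soon as the free cancellations and the relator are trivial. -/
theorem con_of_wordG_eq {c : Con (FreeMonoid (Letter g))}
    (hinv : ∀ l, c (FreeMonoid.ofList [l, letterInv l]) 1)
    (hrel : c (FreeMonoid.ofList (relatorWord g)) 1) {w w' : List (Letter g)}
    (h : wordG w = wordG w') : c (FreeMonoid.ofList w) (FreeMonoid.ofList w') := by
  let f (i : Fin (2 * g)) : c.Quotientˣ :=
    { val := (FreeMonoid.ofList [(i, true)] : FreeMonoid (Letter g))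
      inv := (FreeMonoid.ofList [(i, false)] : FreeMonoid (Letter g))
      val_inv := c.eq.2 (hinv (i, true))
      inv_val := c.eq.2 (hinv (i, false)) }
  have hval (w : List (Letter g)) :
      ((evalWord f w : c.Quotientˣ) : c.Quotient) =
        (FreeMonoid.ofList w : FreeMonoid (Letter g)) := by
    induction w with
    | nil => rfl
    | cons l w ih =>
      have hcons : evalWord f (l :: w) = evalWord f [l] * evalWord f w := by simp [evalWord]
      rw [hcons, Units.val_mul, ih]
      rcases l with ⟨i, _ | _⟩ <;> rfl
  have hlift (w : List (Letter g)) :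
      FreeGroup.lift f (evalWord FreeGroup.of w) = evalWord f w := by
    rw [map_evalWord]
    congr 1
  have hker : ∀ x ∈ ({relatorF g} : Set (FreeGroup (Fin (2 * g)))), FreeGroup.lift f x = 1 := by
    rintro _ rfl
    exact (hlift _).trans (Units.ext ((hval _).trans (c.eq.2 hrel)))
  have htoGroup (w : List (Letter g)) :
      PresentedGroup.toGroup hker (wordG w) = evalWord f w := by
    rw [wordG_eq_mk_evalWord]
    exact hlift w
  rw [← c.eq, ← hval, ← hval, ← htoGroup, ← htoGroup, h]

end Words

/-! ### Cosets and walks in the cover -/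

section Cosets

variable {g : ℕ} {J : Subgroup (Gamma g)}

@[simp] theorem rmul_mkCos (x y : Gamma g) : rmul g J x (mkCos g J y) = mkCos g J (y * x) := rfl

theorem mkCos_surjective : Function.Surjective (mkCos g J) := Quotient.mk_surjective

theorem mkCos_eq_mkCos {x y : Gamma g} : mkCos g J x = mkCos g J y ↔ y * x⁻¹ ∈ J := by
  rw [mkCos, mkCos, Quotient.eq]
  exact QuotientGroup.rightRel_apply

@[simp] theorem rmul_rmul (x y : Gamma g) (v : Cos g J) :
    rmul g J y (rmul g J x v) = rmul g J (x * y) v := by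
  obtain ⟨z, rfl⟩ := mkCos_surjective v
  simp [mul_assoc]

@[simp] theorem rmul_one (v : Cos g J) : rmul g J 1 v = v := by
  obtain ⟨z, rfl⟩ := mkCos_surjective v
  simp

variable (J) in
/-- Right multiplication by a group element as a permutation of the cosets. -/
@[simps] def rmulEquiv (x : Gamma g) : Cos g J ≃ Cos g J where
  toFun := rmul g J x
  invFun := rmul g J x⁻¹
  left_inv v := by simp
  right_inv v := by simp

variable (J) in
/-- The dart of the cover that leaves `v` and reads the letter `l`. -/
def letterDart (v : Cos g J) (l : Letter g) :
    (Cos g J × Fin (2 * g)) × Bool :=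
  ((if l.2 then v else rmul g J (letterG l) v, l.1), l.2)

@[simp] theorem dTail_letterDart (v : Cos g J) (l : Letter g) :
    (cover g J).dTail (letterDart J v l) = v := by
  rcases l with ⟨i, _ | _⟩
  · exact ((rmulEquiv J _).apply_symm_apply v :)
  · rfl

@[simp] theorem dHead_letterDart (v : Cos g J) (l : Letter g) :
    (cover g J).dHead (letterDart J v l) = rmul g J (letterG l) v := by
  rcases l with ⟨i, _ | _⟩ <;> rfl

theorem letterDart_dLet (d : (cover g J).D) :
    letterDart J ((cover g J).dTail d) ((cover g J).dLet d) = d := by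
  rcases d with ⟨⟨v, i⟩, _ | _⟩
  · exact congrArg (fun u => ((u, i), false)) ((rmulEquiv J _).symm_apply_apply v)
  · rfl

theorem letterDart_letterInv (v : Cos g J) (l : Letter g) :
    letterDart J (rmul g J (letterG l) v) (letterInv l) =
      ((letterDart J v l).1, !(letterDart J v l).2) := by
  rcases l with ⟨i, _ | _⟩
  · rfl
  · exact congrArg (fun u => ((u, i), false)) ((rmulEquiv J _).symm_apply_apply v)

theorem relWalk_cons (v : Cos g J) (l : Letter g) (w : List (Letter g)) :
    relWalk g J v (l :: w) = letterDart J v l :: relWalk g J (rmul g J (letterG l) v) w := by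
  rcases l with ⟨i, _ | _⟩ <;> rfl

theorem relWalk_append (v : Cos g J) (w w' : List (Letter g)) :
    relWalk g J v (w ++ w') = relWalk g J v w ++ relWalk g J (rmul g J (wordG w) v) w' := by
  induction w generalizing v with
  | nil => simp [relWalk]
  | cons l w ih => simp [relWalk_cons, ih]

theorem length_relWalk (v : Cos g J) (w : List (Letter g)) :
    (relWalk g J v w).length = w.length := by
  induction w generalizing v with
  | nil => rfl
  | cons l w ih => rw [relWalk_cons, List.length_cons, ih, List.length_cons]

theorem walkFrom_relWalk (v : Cos g J) (w : List (Letter g)) :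
    (cover g J).WalkFrom v (rmul g J (wordG w) v) (relWalk g J v w) := by
  induction w generalizing v with
  | nil =>
    rw [wordG_nil, rmul_one]
    exact .nil (Y := cover g J) v
  | cons l w ih =>
    have hcons := Complex.WalkFrom.cons (Y := cover g J) (letterDart J v l)
      ((dHead_letterDart v l).symm ▸ ih (rmul g J (letterG l) v))
    rw [dTail_letterDart, dHead_letterDart] at hcons
    rw [relWalk_cons, wordG_cons, ← rmul_rmul]
    exact hcons

theorem walkFrom_relWalk_self (v : Cos g J) {w : List (Letter g)} (hw : wordG w = 1) :
    (cover g J).WalkFrom v v (relWalk g J v w) := by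
  simpa [hw] using walkFrom_relWalk v w

theorem dHead_eq_rmul_dTail (d : (cover g J).D) :
    (cover g J).dHead d = rmul g J (letterG ((cover g J).dLet d)) ((cover g J).dTail d) := by
  rcases d with ⟨⟨v, i⟩, _ | _⟩
  · exact ((rmulEquiv J _).symm_apply_apply v).symm
  · rfl

theorem Complex.WalkFrom.exists_eq_relWalk {u v : (cover g J).V} {l : List (cover g J).D}
    (h : (cover g J).WalkFrom u v l) :
    ∃ w, l = relWalk g J u w ∧ v = rmul g J (wordG w) u := by
  induction h with
  | nil => exact ⟨[], rfl, (rmul_one _).symm⟩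
  | @cons d v l _ ih =>
    obtain ⟨w, hl, hv⟩ := ih
    have hd := dHead_eq_rmul_dTail d
    refine ⟨(cover g J).dLet d :: w, ?_, ?_⟩
    · have hcons : d :: l = letterDart J ((cover g J).dTail d) ((cover g J).dLet d) ::
          relWalk g J ((cover g J).dHead d) w :=
        congrArg₂ List.cons (letterDart_dLet d).symm hl
      exact (hcons.trans (congrArg (fun x => _ :: relWalk g J x w) hd)).trans
        (relWalk_cons _ _ _).symm
    · rw [wordG_cons]
      exact (hv.trans (congrArg (rmul g J (wordG w)) hd)).trans (rmul_rmul _ _ _)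

end Cosets

/-! ### Equal words give homotopic walks -/

section WordHomotopy

variable {g : ℕ} {J : Subgroup (Gamma g)}

theorem elemMove_relWalk_letterInv (v : Cos g J) (l : Letter g) :
    (cover g J).elemMove Set.univ Set.univ [] (relWalk g J v [l, letterInv l]) := by
  refine Or.inl ⟨[], [], letterDart J v l, trivial, rfl, ?_⟩
  rw [relWalk_cons, relWalk_cons, letterDart_letterInv]
  rfl

theorem elemMove_relWalk_relatorWord (v : Cos g J) :
    (cover g J).elemMove Set.univ Set.univ [] (relWalk g J v (relatorWord g)) :=
  Or.inr ⟨[], [], relWalk g J v (relatorWord g), ⟨v, trivial, 0, .inl (List.rotate_zero _).symm⟩,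
    rfl, (List.append_nil _).symm⟩

theorem homotopic_relWalk_nil (v : Cos g J) {w : List (Letter g)} (hw : wordG w = 1)
    (h : (cover g J).elemMove Set.univ Set.univ [] (relWalk g J v w)) :
    (cover g J).Homotopic Set.univ Set.univ v v (relWalk g J v w) [] :=
  .rel _ _ ⟨walkFrom_relWalk_self v hw, .nil (Y := cover g J) v, fun _ _ => trivial,
    fun _ _ => trivial, .inr h⟩

variable (J) in
/-- The congruence on words identifying words with the same value in `Γ_g` that lift to homotopic
walks in the cover, from every starting vertex. -/
def homotopyCon : Con (FreeMonoid (Letter g)) where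
  r a b := wordG a.toList = wordG b.toList ∧ ∀ v : Cos g J,
    (cover g J).Homotopic Set.univ Set.univ v (rmul g J (wordG a.toList) v)
      (relWalk g J v a.toList) (relWalk g J v b.toList)
  iseqv :=
    { refl := fun a => ⟨rfl, fun v => .refl _⟩
      symm := fun h => ⟨h.1.symm, fun v => h.1 ▸ (h.2 v).symm⟩
      trans := fun h h' => ⟨h.1.trans h'.1, fun v => (h.2 v).trans _ _ _ (h.1 ▸ h'.2 v)⟩ }
  mul' := by
    rintro a b c d ⟨hab, hhab⟩ ⟨hcd, hhcd⟩
    refine ⟨by simp [hab, hcd], fun v => ?_⟩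
    have hleft := (hhab v).append (.nil (Y := cover g J) v)
      (walkFrom_relWalk (rmul g J (wordG a.toList) v) c.toList)
    have hright := (hhcd (rmul g J (wordG b.toList) v)).append (walkFrom_relWalk v b.toList)
      (.nil (Y := cover g J) _)
    simp only [List.append_nil, rmul_rmul] at hleft hright
    simp only [FreeMonoid.toList_mul, relWalk_append, wordG_append]
    rw [← hab] at hright ⊢
    exact hleft.trans _ _ _ hright

theorem homotopic_relWalk {w w' : List (Letter g)} (h : wordG w = wordG w') (v : Cos g J) :
    (cover g J).Homotopic Set.univ Set.univ v (rmul g J (wordG w) v) (relWalk g J v w)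
      (relWalk g J v w') := by
  have hnil {w : List (Letter g)} (hw : wordG w = 1)
      (h : ∀ v : Cos g J, (cover g J).elemMove Set.univ Set.univ [] (relWalk g J v w)) :
      homotopyCon J (FreeMonoid.ofList w) 1 :=
    ⟨hw, fun v => by
      rw [FreeMonoid.toList_ofList, hw, rmul_one]
      exact homotopic_relWalk_nil v hw (h v)⟩
  exact (con_of_wordG_eq
    (fun l => hnil (by simp) fun v => elemMove_relWalk_letterInv v l)
    (hnil wordG_relatorWord elemMove_relWalk_relatorWord) h).2 v

end WordHomotopy

/-! ### The dual graph of the cover -/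

section Relator

variable {g : ℕ}

/-- Every signed letter occurs exactly once in the relator; this is its position. -/
def relatorEquiv : Letter g ≃ Fin (4 * g) where
  toFun l := ⟨4 * (l.1 / 2) + l.1 % 2 + if l.2 then 0 else 2, by have := l.1.2; split <;> omega⟩
  invFun p := (relLabel g p, relSign g p)
  left_inv := by
    rintro ⟨i, b⟩
    have := i.2
    cases b <;> simp [relLabel, relSign, Fin.ext_iff] <;> omega
  right_inv p := by
    simp only [relLabel, relSign, Fin.ext_iff, decide_eq_true_eq]
    split <;> omega

theorem relatorWord_eq_ofFn : relatorWord g = List.ofFn (relatorEquiv (g := g)).symm :=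
  List.ofFn_eq_map.symm

variable (g) in
/-- The value in `Γ_g` of the prefix of length `n` of the relator. -/
def relPrefix (n : ℕ) : Gamma g := wordG ((relatorWord g).take n)

@[simp] theorem relPrefix_zero : relPrefix g 0 = 1 := rfl

theorem getElem?_relatorWord_relatorEquiv (l : Letter g) :
    (relatorWord g)[(relatorEquiv l : ℕ)]? = some l := by
  simp [relatorWord_eq_ofFn]

theorem relPrefix_relatorEquiv_add_one (l : Letter g) :
    relPrefix g (relatorEquiv l + 1) = relPrefix g (relatorEquiv l) * letterG l := by
  rw [relPrefix, List.take_add_one, getElem?_relatorWord_relatorEquiv]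
  simp [relPrefix]

/-- Around a vertex, crossing the edge with letter `l` leads from the corner of a polygon before
`l` to the corner after `l⁻¹`; these crossings connect all corners. -/
theorem iff_zero_of_crossing {P : ℕ → Prop}
    (h : ∀ l : Letter g, P (relatorEquiv l) ↔ P (relatorEquiv (letterInv l) + 1)) {n : ℕ}
    (hn : n ≤ 4 * g) : P n ↔ P 0 := by
  have hcross {k : ℕ} (hk : k < g) : (P (4 * k) ↔ P (4 * k + 3)) ∧ (P (4 * k + 1) ↔ P (4 * k + 4)) ∧
      (P (4 * k + 2) ↔ P (4 * k + 1)) ∧ (P (4 * k + 3) ↔ P (4 * k + 2)) := by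
    have hdiv : (2 * k + 1) / 2 = k := by omega
    have ha (b : Bool) := h (⟨2 * k, by omega⟩, b)
    have hb (b : Bool) := h (⟨2 * k + 1, by omega⟩, b)
    refine ⟨?_, ?_, ?_, ?_⟩
    · simpa [relatorEquiv, letterInv] using ha true
    · simpa [relatorEquiv, letterInv, hdiv] using hb true
    · simpa [relatorEquiv, letterInv] using ha false
    · simpa [relatorEquiv, letterInv, hdiv] using hb false
  have hblock {k : ℕ} (hk : k ≤ g) : P (4 * k) ↔ P 0 := by
    induction k with
    | zero => rfl
    | succ k ih =>
      obtain ⟨h₁, h₂, h₃, h₄⟩ := hcross hk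
      rw [← ih (by omega), mul_add_one, ← h₂, ← h₃, ← h₄, ← h₁]
  rcases hn.eq_or_lt with rfl | hn
  · exact hblock le_rfl
  obtain ⟨k, r, hr, rfl⟩ : ∃ k r, r < 4 ∧ n = 4 * k + r :=
    ⟨n / 4, n % 4, Nat.mod_lt _ (by norm_num), (Nat.div_add_mod n 4).symm⟩
  obtain ⟨h₁, -, h₃, h₄⟩ := hcross (k := k) (by omega)
  rw [← hblock (k := k) (by omega)]
  interval_cases r
  · rfl
  · rw [← h₃, ← h₄, ← h₁]
  · rw [← h₄, ← h₁]
  · rw [← h₁]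

end Relator

section CoverDual

variable {g : ℕ} {J : Subgroup (Gamma g)}

theorem walkChain_relWalk (v : Cos g J) (w : List (Letter g)) :
    walkChain (relWalk g J v w) =
      ∑ p : Fin w.length, dartChain (letterDart J (rmul g J (wordG (w.take p)) v) w[p]) := by
  induction w generalizing v with
  | nil => rfl
  | cons l w ih =>
    rw [relWalk_cons, walkChain_cons, ih]
    simp [Fin.sum_univ_succ]

theorem walkChain_relWalk_relatorWord (v : Cos g J) :
    walkChain (relWalk g J v (relatorWord g)) =
      ∑ l : Letter g, dartChain (letterDart J (rmul g J (relPrefix g (relatorEquiv l)) v) l) := by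
  have hlen : 4 * g = (relatorWord g).length := by simp [relatorWord]
  rw [walkChain_relWalk, ← (relatorEquiv.trans (finCongr hlen)).sum_comp]
  refine Finset.sum_congr rfl fun l _ => ?_
  simp [relPrefix, relatorWord_eq_ofFn]

variable (J) in
/-- The dual graph of `J\~Σ_g`: the corner of the `4g`-gon based at `v` where the `n`-th letter
of the relator starts is the vertex `rmul g J (relPrefix g n) v`. -/
def coverDual : DualGraph (Cos g J × Fin (2 * g)) (Cos g J) (Fin (2 * g)) where
  leftEquiv := Equiv.prodCongrLeft fun i =>
    (rmulEquiv J (relPrefix g (relatorEquiv (i, true)))).symm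
  rightEquiv := Equiv.prodCongrLeft fun i =>
    (rmulEquiv J (relPrefix g (relatorEquiv (i, false) + 1))).symm

theorem coverDual_boundary_single (v : Cos g J) :
    (coverDual J).boundary (Finsupp.single v 1) = walkChain (relWalk g J v (relatorWord g)) := by
  rw [walkChain_relWalk_relatorWord, DualGraph.boundary, Finsupp.linearCombination_single, one_smul,
    Fintype.sum_prod_type]
  refine Finset.sum_congr rfl fun i _ => ?_
  simp [letterDart, coverDual, relPrefix_relatorEquiv_add_one, sub_eq_add_neg]

theorem boundary₂_cover : (cover g J).boundary₂ = (coverDual J).boundary := by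
  refine Finsupp.lhom_ext' fun v => LinearMap.ext_ring ?_
  exact ((Complex.boundary₂_single (Y := cover g J) v 1).trans (one_smul ℤ _)).trans
    (coverDual_boundary_single v).symm

theorem coverDual_left_letterDart (v : Cos g J) (l : Letter g) :
    rmul g J (relPrefix g (relatorEquiv l))⁻¹ v =
      if l.2 then (coverDual J).left (letterDart J v l).1
      else (coverDual J).right (letterDart J v l).1 := by
  rcases l with ⟨i, _ | _⟩
  · simp [letterDart, coverDual, DualGraph.right, relPrefix_relatorEquiv_add_one]
  · rfl

theorem coverDual_right_letterDart (v : Cos g J) (l : Letter g) :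
    rmul g J (relPrefix g (relatorEquiv (letterInv l) + 1))⁻¹ v =
      if l.2 then (coverDual J).right (letterDart J v l).1
      else (coverDual J).left (letterDart J v l).1 := by
  rcases l with ⟨i, _ | _⟩
  · simp [letterDart, letterInv, coverDual, DualGraph.left, relPrefix_relatorEquiv_add_one]
  · rfl

theorem left_iff_of_crossing {Q : Cos g J → Prop} {v : Cos g J}
    (h : ∀ l : Letter g, Q ((coverDual J).left (letterDart J v l).1) ↔
      Q ((coverDual J).right (letterDart J v l).1)) (l : Letter g) :
    Q ((coverDual J).left (letterDart J v l).1) ↔ Q v := by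
  have hcorner {n : ℕ} (hn : n ≤ 4 * g) : Q (rmul g J (relPrefix g n)⁻¹ v) ↔ Q v := by
    refine (iff_zero_of_crossing (P := fun n => Q (rmul g J (relPrefix g n)⁻¹ v)) (fun l => ?_)
      hn).trans (by simp)
    have := h l
    rw [coverDual_left_letterDart, coverDual_right_letterDart]
    split_ifs
    exacts [this, this.symm]
  have hl := hcorner (relatorEquiv l).2.le
  rw [coverDual_left_letterDart] at hl
  split_ifs at hl
  exacts [hl, (h l).trans hl]

/-- The dual graph of the cover is connected. -/
theorem eq_of_left_eq_right {α : Type*} {A : Cos g J → α}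
    (h : ∀ e, A ((coverDual J).left e) = A ((coverDual J).right e)) (u v : Cos g J) :
    A u = A v := by
  have hleft (v : Cos g J) (l : Letter g) : A ((coverDual J).left (letterDart J v l).1) = A v :=
    (left_iff_of_crossing (Q := fun x => A x = A v) (fun l => by rw [h]) l).2 rfl
  have hletter (v : Cos g J) (l : Letter g) : A (rmul g J (letterG l) v) = A v := by
    rw [← hleft v l, ← hleft _ (letterInv l), letterDart_letterInv]
  have hword (w : List (Letter g)) : ∀ v : Cos g J, A (rmul g J (wordG w) v) = A v := by
    induction w with
    | nil => simp
    | cons l w ih =>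
      intro v
      rw [wordG_cons, ← rmul_rmul, ih, hletter]
  obtain ⟨x, rfl⟩ := mkCos_surjective u
  obtain ⟨y, rfl⟩ := mkCos_surjective v
  obtain ⟨w, hw⟩ := wordG_surjective (x⁻¹ * y)
  rw [← hword w, hw, rmul_mkCos, mul_inv_cancel_left]

theorem coverDual_boundary_injective [Infinite (Cos g J)] :
    Function.Injective (coverDual J).boundary := by
  rw [injective_iff_map_eq_zero]
  intro A hA
  have hconst (e) : A ((coverDual J).left e) = A ((coverDual J).right e) := by
    rw [← sub_eq_zero, ← DualGraph.boundary_apply, hA, Finsupp.zero_apply]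
  obtain ⟨v, hv⟩ := Infinite.exists_notMem_finset A.support
  ext u
  rw [eq_of_left_eq_right hconst u v, Finsupp.notMem_support_iff.1 hv, Finsupp.zero_apply]

theorem src_eq_or_dst_eq_iff {e : (cover g J).E} {v : (cover g J).V} :
    (cover g J).src e = v ∨ (cover g J).dst e = v ↔ ∃ l, (letterDart J v l).1 = e := by
  constructor
  · rintro (rfl | rfl)
    · exact ⟨(e.2, true), rfl⟩
    · exact ⟨(e.2, false), congrArg (fun u => (u, e.2)) ((rmulEquiv J _).symm_apply_apply e.1)⟩
  · rintro ⟨⟨i, _ | _⟩, rfl⟩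
    · exact .inr (dTail_letterDart v (i, false))
    · exact .inl rfl

open Classical in
theorem card_image_src_union_image_dst_le (K : (coverDual J).Region) :
    (K.edges.image (cover g J).src ∪ K.edges.image (cover g J).dst).card ≤
      K.faces.card + 2 * K.exposed := by
  let X := K.edges.filter fun e => (coverDual J).left e ∉ K.faces ∨ (coverDual J).right e ∉ K.faces
  have hX : X.card ≤ K.exposed := by
    rw [Finset.card_filter]
    refine Finset.sum_le_sum fun e _ => ?_
    split_ifs <;> simp_all
  have hsub : K.edges.image (cover g J).src ∪ K.edges.image (cover g J).dst ⊆
      K.faces ∪ (X.image (cover g J).src ∪ X.image (cover g J).dst) := by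
    intro v hv
    have hmem (S : Finset (cover g J).E) : v ∈ S.image (cover g J).src ∪ S.image (cover g J).dst ↔
        ∃ e ∈ S, ∃ l, (letterDart J v l).1 = e := by
      simp only [Finset.mem_union, Finset.mem_image, ← exists_or, ← and_or_left,
        src_eq_or_dst_eq_iff]
    obtain ⟨_, he, l, rfl⟩ := (hmem _).1 hv
    by_cases hvX : v ∈ X.image (cover g J).src ∪ X.image (cover g J).dst
    · exact Finset.mem_union_right _ hvX
    have hclosed (l) (hl : (letterDart J v l).1 ∈ K.edges) :
        (coverDual J).left (letterDart J v l).1 ∈ K.faces ∧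
          (coverDual J).right (letterDart J v l).1 ∈ K.faces := by
      by_contra hout
      have hlX : (letterDart J v l).1 ∈ X := by
        simpa only [X, Finset.mem_filter, hl, true_and, ← not_and_or] using hout
      exact hvX ((hmem X).2 ⟨_, hlX, l, rfl⟩)
    refine Finset.mem_union_left _ ((left_iff_of_crossing (Q := (· ∈ K.faces)) (fun l => ?_) l).1
      (hclosed l he).1)
    exact ⟨fun h => (hclosed l (K.mem_edges_of_left h)).2,
      fun h => (hclosed l (K.mem_edges_of_right h)).1⟩
  calc _ ≤ K.faces.card + ((X.image (cover g J).src).card + (X.image (cover g J).dst).card) :=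
        (Finset.card_le_card hsub).trans ((Finset.card_union_le _ _).trans
          (Nat.add_le_add_left (Finset.card_union_le _ _) _))
    _ ≤ K.faces.card + (X.card + X.card) := by gcongr <;> exact Finset.card_image_le
    _ ≤ K.faces.card + 2 * K.exposed := by omega

open Classical in
/-- The isoperimetric inequality, which rests on the negative Euler characteristic of `Σ_g`. -/
theorem card_faces_le (hg : 2 ≤ g) [Infinite (Cos g J)] {E₀ : Finset (cover g J).E}
    (hE₀ : (cover g J).cycles ≤
      (cover g J).boundaries ⊔ Finsupp.supported ℤ ℤ (E₀ : Set (cover g J).E))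
    (K : (coverDual J).Region) (hK : E₀ ⊆ K.edges) :
    K.faces.card ≤ 2 * K.exposed + E₀.card := by
  have hedges := K.two_mul_card_edges
  have hrank : K.edges.card ≤ (K.edges.image (cover g J).src ∪ K.edges.image (cover g J).dst).card +
      ((K.faces.card + K.exposed) + E₀.card) :=
    Complex.card_edges_le (Y := cover g J) (D := coverDual J) coverDual_boundary_injective
      (boundary₂_cover ▸ hE₀) K hK
  have hverts := card_image_src_union_image_dst_le K
  have hgenus : 8 * K.faces.card ≤ 2 * (2 * g) * K.faces.card := by gcongr; omega
  rw [Fintype.card_fin] at hedges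
  omega

end CoverDual

/-! ### Chains generated by the loops of the generators -/

section CoverMap

variable {g : ℕ} {H J : Subgroup (Gamma g)}

theorem coverMapV_rmul (h : H ≤ J) (x : Gamma g) (v : Cos g H) :
    coverMapV h (rmul g H x v) = rmul g J x (coverMapV h v) := by
  obtain ⟨y, rfl⟩ := mkCos_surjective v
  rfl

theorem coverMapV_refl (v : Cos g J) : coverMapV le_rfl v = v := by
  obtain ⟨y, rfl⟩ := mkCos_surjective v
  rfl

theorem coverMapD_letterDart (h : H ≤ J) (v : Cos g H) (l : Letter g) :
    coverMapD h (letterDart H v l) = letterDart J (coverMapV h v) l := by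
  rcases l with ⟨i, _ | _⟩
  · exact congrArg (fun u => ((u, i), false)) (coverMapV_rmul h _ v)
  · rfl

theorem map_coverMapD_relWalk (h : H ≤ J) (v : Cos g H) (w : List (Letter g)) :
    (relWalk g H v w).map (coverMapD h) = relWalk g J (coverMapV h v) w := by
  induction w generalizing v with
  | nil => rfl
  | cons l w ih =>
    rw [relWalk_cons, relWalk_cons, ← coverMapV_rmul, ← ih, ← coverMapD_letterDart]
    rfl

/-- The covering `H\~Σ_g → J\~Σ_g` of intermediate covers, on dual graphs. -/
def coverDualCover (h : H ≤ J) : DualGraph.Cover (coverDual H) (coverDual J) where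
  mapEdge := coverMapE h
  mapFace := coverMapV h
  leftEquiv_mapEdge e := Prod.ext (coverMapV_rmul h _ e.1).symm rfl
  rightEquiv_mapEdge e := Prod.ext (coverMapV_rmul h _ e.1).symm rfl

end CoverMap

section Generation

variable {g : ℕ} {H J : Subgroup (Gamma g)} {M : Submodule ℤ (Cos g H × Fin (2 * g) →₀ ℤ)}

theorem walkChain_relWalk_append (v : Cos g H) (w w' : List (Letter g)) :
    walkChain (relWalk g H v (w ++ w')) =
      walkChain (relWalk g H v w) + walkChain (relWalk g H (rmul g H (wordG w) v) w') := by
  rw [relWalk_append, walkChain_append]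

theorem walkChain_relWalk_mem_iff (hM : (cover g H).boundaries ≤ M) {w w' : List (Letter g)}
    (h : wordG w = wordG w') (v : Cos g H) :
    walkChain (relWalk g H v w) ∈ M ↔ walkChain (relWalk g H v w') ∈ M := by
  have hsub : walkChain (relWalk g H v w) - walkChain (relWalk g H v w') ∈ M :=
    hM (homotopic_relWalk h v).walkChain_sub_mem_boundaries
  exact ⟨fun h => by simpa using M.sub_mem h hsub, fun h => by simpa using M.add_mem hsub h⟩

theorem walkChain_relWalk_add_wordInv_mem (v : Cos g H) (w : List (Letter g)) :
    walkChain (relWalk g H v w) + walkChain (relWalk g H (rmul g H (wordG w) v) (wordInv w)) ∈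
      (cover g H).boundaries := by
  rw [← walkChain_relWalk_append]
  refine (walkChain_relWalk_mem_iff (w' := []) le_rfl ?_ v).2 (Submodule.zero_mem _)
  rw [wordG_append, wordG_wordInv, mul_inv_cancel, wordG_nil]

theorem coverMapV_rmul_eq_base (h : H ≤ J) {x : Gamma g} (hx : x ∈ J) {v : Cos g H}
    (hv : coverMapV h v = mkCos g J 1) : coverMapV h (rmul g H x v) = mkCos g J 1 := by
  rw [coverMapV_rmul, hv, rmul_mkCos, mkCos_eq_mkCos]
  simpa using hx

theorem walkChain_relWalk_mem_of_closure (h : H ≤ J) {S : Set (Gamma g)}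
    (hS : Subgroup.closure S = J) (hM : (cover g H).boundaries ≤ M)
    (hgen : ∀ s ∈ S, ∃ w, wordG w = s ∧
      ∀ v, coverMapV h v = mkCos g J 1 → walkChain (relWalk g H v w) ∈ M)
    {w : List (Letter g)} (hw : wordG w ∈ J) {v : Cos g H} (hv : coverMapV h v = mkCos g J 1) :
    walkChain (relWalk g H v w) ∈ M := by
  suffices key : ∀ x ∈ Subgroup.closure S, ∃ w, wordG w = x ∧
      ∀ v, coverMapV h v = mkCos g J 1 → walkChain (relWalk g H v w) ∈ M by
    obtain ⟨w', hw', hmem⟩ := key _ (hS ▸ hw)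
    exact (walkChain_relWalk_mem_iff hM hw' v).1 (hmem v hv)
  intro x hx
  induction hx using Subgroup.closure_induction with
  | mem s hs => exact hgen s hs
  | one => exact ⟨[], rfl, fun _ _ => M.zero_mem⟩
  | mul a b ha _ iha ihb =>
    obtain ⟨u, rfl, hu⟩ := iha
    obtain ⟨u', rfl, hu'⟩ := ihb
    refine ⟨u ++ u', wordG_append u u', fun v hv => ?_⟩
    rw [walkChain_relWalk_append]
    exact M.add_mem (hu v hv) (hu' _ (coverMapV_rmul_eq_base h (hS ▸ ha) hv))
  | inv a ha iha =>
    obtain ⟨u, rfl, hu⟩ := iha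
    refine ⟨wordInv u, wordG_wordInv u, fun v hv => ?_⟩
    have hv' := coverMapV_rmul_eq_base h (J.inv_mem (hS ▸ ha)) hv
    have hback := hM (walkChain_relWalk_add_wordInv_mem (rmul g H (wordG u)⁻¹ v) u)
    rw [rmul_rmul, inv_mul_cancel, rmul_one] at hback
    exact (M.add_mem_iff_right (hu _ hv')).1 hback

theorem exists_mkCos_wordG_eq (v : Cos g H) : ∃ w, mkCos g H (wordG w) = v := by
  obtain ⟨x, rfl⟩ := mkCos_surjective v
  obtain ⟨w, rfl⟩ := wordG_surjective x
  exact ⟨w, rfl⟩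

-- Each edge, prolonged at both ends by the chosen paths `t` to the base point, is a loop.
theorem single_sub_mem_of_forall_loop (hM : (cover g H).boundaries ≤ M)
    (hloop : ∀ w, wordG w ∈ H → walkChain (relWalk g H (mkCos g H 1) w) ∈ M)
    {t : Cos g H → List (Letter g)} (ht : ∀ v, mkCos g H (wordG (t v)) = v) (v : Cos g H)
    (i : Fin (2 * g)) :
    Finsupp.single (v, i) 1 -
      (walkChain (relWalk g H (mkCos g H 1) (t (rmul g H (PresentedGroup.of i) v))) -
        walkChain (relWalk g H (mkCos g H 1) (t v))) ∈ M := by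
  have ht' (v : Cos g H) : rmul g H (wordG (t v)) (mkCos g H 1) = v := by
    rw [rmul_mkCos, one_mul, ht]
  set u := rmul g H (PresentedGroup.of i) v with hu
  have hmem : wordG (t v ++ ((i, true) :: wordInv (t u))) ∈ H := by
    have : mkCos g H (wordG (t v) * PresentedGroup.of i) = mkCos g H (wordG (t u)) := by
      rw [← rmul_mkCos, ht, ht]
    simpa [mul_assoc] using H.inv_mem (mkCos_eq_mkCos.1 this)
  have h₁ := hloop _ hmem
  have h₂ := hM (walkChain_relWalk_add_wordInv_mem (mkCos g H 1) (t u))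
  rw [walkChain_relWalk_append, ht', relWalk_cons, walkChain_cons, letterG_true, ← hu] at h₁
  rw [ht'] at h₂
  convert M.sub_mem h₁ h₂ using 1
  change _ = _ + (Finsupp.single (v, i) 1 + _) - _
  abel

theorem cycles_le_of_forall_loop (hM : (cover g H).boundaries ≤ M)
    (hloop : ∀ w, wordG w ∈ H → walkChain (relWalk g H (mkCos g H 1) w) ∈ M) :
    (cover g H).cycles ≤ M := by
  choose t ht using exists_mkCos_wordG_eq (H := H)
  let T : (Cos g H →₀ ℤ) →ₗ[ℤ] (Cos g H × Fin (2 * g) →₀ ℤ) :=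
    Finsupp.linearCombination ℤ fun v => walkChain (relWalk g H (mkCos g H 1) (t v))
  let d : (Cos g H × Fin (2 * g) →₀ ℤ) →ₗ[ℤ] (Cos g H →₀ ℤ) := (cover g H).boundary₁
  have hT : ∀ z, z - T (d z) ∈ M := by
    intro z
    induction z using Finsupp.induction_linear with
    | zero => simp
    | add a b ha hb =>
      rw [map_add, map_add, add_sub_add_comm]
      exact M.add_mem ha hb
    | single e n =>
      obtain ⟨v, i⟩ := e
      have h := M.smul_mem n (single_sub_mem_of_forall_loop hM hloop ht v i)
      have hd : d (Finsupp.single (v, i) n) =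
          n • (Finsupp.single (rmul g H (PresentedGroup.of i) v) 1 - Finsupp.single v 1) :=
        Complex.boundary₁_single (Y := cover g H) _ n
      rw [hd, map_smul, map_sub, Finsupp.linearCombination_single,
        Finsupp.linearCombination_single, one_smul, one_smul, ← Finsupp.smul_single_one,
        ← smul_sub]
      exact h
  intro (z : Cos g H × Fin (2 * g) →₀ ℤ) hz
  have h := hT z
  rwa [show d z = 0 from Complex.mem_cycles.1 hz, map_zero, sub_zero] at h

end Generation

section FiniteGeneration

variable {g : ℕ} {J : Subgroup (Gamma g)}

/-- Every loop of `J\~Σ_g` at the base point is carried by the edges `E₀` up to boundaries, and this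
persists when the loop is lifted to a path in an intermediate cover. -/
def CarriesLoops (E₀ : Set (cover g J).E) : Prop :=
  ∀ (H : Subgroup (Gamma g)) (h : H ≤ J) (v : Cos g H), coverMapV h v = mkCos g J 1 →
    ∀ w, wordG w ∈ J → walkChain (relWalk g H v w) ∈
      (cover g H).boundaries ⊔ Finsupp.supported ℤ ℤ (coverMapE h ⁻¹' E₀)

theorem exists_finset_carriesLoops (hJ : J.FG) :
    ∃ E₀ : Finset (cover g J).E, CarriesLoops (E₀ : Set (cover g J).E) := by
  classical
  obtain ⟨S, hS⟩ := hJ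
  choose t ht using wordG_surjective (g := g)
  let loop (s : Gamma g) : List (cover g J).D := relWalk g J (mkCos g J 1) (t s)
  refine ⟨S.biUnion fun s => ((loop s).map Prod.fst).toFinset,
    fun H h v hv w hw => walkChain_relWalk_mem_of_closure h hS le_sup_left
      (fun s hs => ⟨t s, ht s, fun u hu => ?_⟩) hw hv⟩
  refine (le_sup_right : Finsupp.supported ℤ ℤ _ ≤ _) ((Finsupp.mem_supported ℤ _).2 ?_)
  intro e he
  obtain ⟨b, hb⟩ := exists_mem_of_walkChain_ne_zero (Finsupp.mem_support_iff.1 he)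
  have hmem : coverMapD h (e, b) ∈ loop s := by
    rw [show loop s = relWalk g J (coverMapV h u) (t s) from hu ▸ rfl, ← map_coverMapD_relWalk]
    exact List.mem_map_of_mem hb
  exact Finset.mem_biUnion.2 ⟨s, hs, List.mem_toFinset.2 (List.mem_map_of_mem hmem)⟩

theorem CarriesLoops.cycles_le {E₀ : Set (cover g J).E} (hE₀ : CarriesLoops E₀) :
    (cover g J).cycles ≤ (cover g J).boundaries ⊔ Finsupp.supported ℤ ℤ E₀ := by
  have hid : coverMapE (le_refl J) = id := funext fun e => Prod.ext (coverMapV_refl e.1) rfl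
  refine cycles_le_of_forall_loop le_sup_left fun w hw => ?_
  have h := hE₀ J le_rfl (mkCos g J 1) rfl w hw
  rwa [hid, Set.preimage_id] at h

end FiniteGeneration

/-! ### Holonomy and shortest loops in cyclic covers -/

section Holonomy

variable {g : ℕ} {H : Subgroup (Gamma g)}

theorem rmul_mkCos_eq_self_iff {x y : Gamma g} :
    rmul g H x (mkCos g H y) = mkCos g H y ↔ y * x * y⁻¹ ∈ H := by
  rw [rmul_mkCos, eq_comm, mkCos_eq_mkCos]

theorem mkCos_out (v : Cos g H) : mkCos g H v.out = v := Quotient.out_eq v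

/-- The holonomy along a path from the coset `v` with value `x`: the defect of `x` from carrying the
chosen representative of `v` to that of the end point. -/
def transport (v : Cos g H) (x : Gamma g) : H :=
  ⟨v.out * x * (rmul g H x v).out⁻¹, by
    rw [← mkCos_eq_mkCos, mkCos_out, ← rmul_mkCos, mkCos_out]⟩

theorem transport_one (v : Cos g H) : transport v 1 = 1 :=
  Subtype.ext (by simp [transport])

theorem transport_mul (v : Cos g H) (x y : Gamma g) :
    transport v (x * y) = transport v x * transport (rmul g H x v) y :=
  Subtype.ext (by simp [transport, rmul_rmul, mul_assoc])

theorem transport_rmul_inv (v : Cos g H) (x : Gamma g) :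
    transport (rmul g H x⁻¹ v) x = (transport v x⁻¹)⁻¹ :=
  eq_inv_of_mul_eq_one_right (by rw [← transport_mul, inv_mul_cancel, transport_one])

variable [IsMulCommutative H]

open scoped IsMulCommutative

theorem coe_transport_mkCos {x y : Gamma g} (h : y * x * y⁻¹ ∈ H) :
    (transport (mkCos g H y) x : Gamma g) = y * x * y⁻¹ := by
  have hrep : (mkCos g H y).out * y⁻¹ ∈ H := by rw [← mkCos_eq_mkCos, mkCos_out]
  have hcomm : (mkCos g H y).out * y⁻¹ * (y * x * y⁻¹) =
      y * x * y⁻¹ * ((mkCos g H y).out * y⁻¹) :=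
    congrArg Subtype.val (mul_comm (⟨_, hrep⟩ : H) ⟨_, h⟩)
  change (mkCos g H y).out * x * (rmul g H x (mkCos g H y)).out⁻¹ = _
  rw [rmul_mkCos_eq_self_iff.2 h, mul_inv_eq_iff_eq_mul, ← mul_left_inj y⁻¹]
  simpa only [mul_assoc, inv_mul_cancel_left] using hcomm

variable (H) in
/-- The holonomy homomorphism on 1-chains of the cover of an abelian subgroup `H`. -/
def holonomy : (Cos g H × Fin (2 * g) →₀ ℤ) →ₗ[ℤ] Additive H :=
  Finsupp.linearCombination ℤ fun e => Additive.ofMul (transport e.1 (PresentedGroup.of e.2))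

theorem holonomy_dartChain_letterDart (v : Cos g H) (l : Letter g) :
    holonomy H (dartChain (letterDart H v l)) = Additive.ofMul (transport v (letterG l)) := by
  have hsingle (e : Cos g H × Fin (2 * g)) : holonomy H (Finsupp.single e 1) =
      Additive.ofMul (transport e.1 (PresentedGroup.of e.2)) := by
    rw [holonomy, Finsupp.linearCombination_single, one_smul]
  rcases l with ⟨i, _ | _⟩
  · rw [letterDart, dartChain_false, map_neg, hsingle, ← ofMul_inv]
    exact congrArg _ (inv_eq_iff_eq_inv.2 (transport_rmul_inv v _))
  · exact hsingle _

theorem holonomy_walkChain_relWalk (v : Cos g H) (w : List (Letter g)) :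
    holonomy H (walkChain (relWalk g H v w)) = Additive.ofMul (transport v (wordG w)) := by
  induction w generalizing v with
  | nil => rw [wordG_nil, transport_one]; exact map_zero _
  | cons l w ih =>
    rw [relWalk_cons, walkChain_cons, map_add, ih, holonomy_dartChain_letterDart, wordG_cons,
      transport_mul, ofMul_mul]

theorem holonomy_eq_zero {z : Cos g H × Fin (2 * g) →₀ ℤ} (hz : z ∈ (cover g H).boundaries) :
    holonomy H z = 0 := by
  suffices h : holonomy H ∘ₗ (coverDual H).boundary = 0 by
    obtain ⟨A, rfl⟩ := hz
    rw [boundary₂_cover]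
    exact LinearMap.congr_fun h A
  refine Finsupp.lhom_ext' fun v => LinearMap.ext_ring ?_
  change holonomy H ((coverDual H).boundary (Finsupp.single v 1)) = 0
  rw [coverDual_boundary_single, holonomy_walkChain_relWalk, wordG_relatorWord, transport_one]
  rfl

theorem conj_eq_zpow_of_homologous {x y : Gamma g} {w u : List (Letter g)} {k : ℤ}
    (hw : x * wordG w * x⁻¹ ∈ H) (hu : y * wordG u * y⁻¹ ∈ H)
    (h : walkChain (relWalk g H (mkCos g H y) u) - k • walkChain (relWalk g H (mkCos g H x) w) ∈
      (cover g H).boundaries) :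
    y * wordG u * y⁻¹ = (x * wordG w * x⁻¹) ^ k := by
  have hhol := holonomy_eq_zero h
  rw [map_sub, map_smul, holonomy_walkChain_relWalk, holonomy_walkChain_relWalk, sub_eq_zero,
    ← ofMul_zpow] at hhol
  rw [← coe_transport_mkCos hw, ← coe_transport_mkCos hu, Additive.ofMul.injective hhol,
    Subgroup.coe_zpow]

end Holonomy

section CyclicCover

variable {g : ℕ} {H : Subgroup (Gamma g)}

theorem exists_homologous_loop {x : Gamma g} {w : List (Letter g)} (h : x * wordG w * x⁻¹ ∈ H) :
    ∃ u, wordG u = x * wordG w * x⁻¹ ∧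
      walkChain (relWalk g H (mkCos g H 1) u) - walkChain (relWalk g H (mkCos g H x) w) ∈
        (cover g H).boundaries := by
  obtain ⟨t, rfl⟩ := wordG_surjective x
  refine ⟨t ++ (w ++ wordInv t), by
    rw [wordG_append, wordG_append, wordG_wordInv, mul_assoc], ?_⟩
  have hback := walkChain_relWalk_add_wordInv_mem (mkCos g H 1) t
  rw [walkChain_relWalk_append, walkChain_relWalk_append]
  rw [rmul_mkCos, one_mul] at hback ⊢
  rw [rmul_mkCos_eq_self_iff.2 h]
  convert hback using 1
  abel

theorem walkChain_mem_cycles_of_conj_mem {x : Gamma g} {w : List (Letter g)}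
    (h : x * wordG w * x⁻¹ ∈ H) :
    walkChain (relWalk g H (mkCos g H x) w) ∈ (cover g H).cycles := by
  have hwalk := walkFrom_relWalk (mkCos g H x) w
  rw [rmul_mkCos_eq_self_iff.2 h] at hwalk
  exact hwalk.walkChain_mem_cycles

theorem boundaries_cover_le_cycles : (cover g H).boundaries ≤ (cover g H).cycles :=
  Complex.boundaries_le_cycles fun v => ⟨v, walkFrom_relWalk_self v wordG_relatorWord⟩

theorem cycles_zpowers_le (w : List (Letter g)) :
    (cover g (Subgroup.zpowers (wordG w))).cycles ≤
      (cover g (Subgroup.zpowers (wordG w))).boundaries ⊔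
        Submodule.span ℤ {walkChain (relWalk g (Subgroup.zpowers (wordG w)) (mkCos g _ 1) w)} := by
  refine cycles_le_of_forall_loop le_sup_left fun u hu => walkChain_relWalk_mem_of_closure le_rfl
    (Subgroup.zpowers_eq_closure _).symm le_sup_left ?_ hu rfl
  rintro _ rfl
  refine ⟨w, rfl, fun v hv => ?_⟩
  obtain rfl : v = mkCos g _ 1 := (coverMapV_refl v).symm.trans hv
  exact (le_sup_right (a := (cover g _).boundaries)) (Submodule.mem_span_singleton_self _)

theorem conjLen_le {x γ : Gamma g} {w : List (Letter g)} (h : x * wordG w * x⁻¹ = γ) :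
    conjLen γ ≤ w.length :=
  Nat.sInf_le ⟨w, rfl, x, h⟩

theorem conjLen_le_of_conj_eq_zpow {x γ : Gamma g} {w : List (Letter g)} {k : ℤ}
    (h : x * wordG w * x⁻¹ = γ ^ k) (hk : k.natAbs = 1) : conjLen γ ≤ w.length := by
  rcases Int.natAbs_eq_iff.1 hk with rfl | rfl
  · exact conjLen_le (h.trans (zpow_one γ))
  · have hinv : x * wordG (wordInv w) * x⁻¹ = γ := by
      rw [wordG_wordInv, ← conj_inv, h]
      simp
    simpa [wordInv] using conjLen_le hinv

theorem walkChain_notMem_boundaries {x γ : Gamma g} {w : List (Letter g)}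
    (hγ : x * wordG w * x⁻¹ = γ) (h1 : γ ≠ 1) :
    walkChain (relWalk g (Subgroup.zpowers γ) (mkCos g _ x) w) ∉
      (cover g (Subgroup.zpowers γ)).boundaries := by
  intro hB
  have hmem : x * wordG w * x⁻¹ ∈ Subgroup.zpowers γ := hγ ▸ Subgroup.mem_zpowers γ
  refine h1 (hγ.symm.trans ((conj_eq_zpow_of_homologous (k := 0) hmem hmem ?_).trans (zpow_zero _)))
  rwa [zero_smul, sub_zero]

theorem conjLen_le_l1Norm {γ : Gamma g} {z : Cos g (Subgroup.zpowers γ) × Fin (2 * g) →₀ ℤ}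
    (hz : z ∈ (cover g (Subgroup.zpowers γ)).cycles)
    (hzB : z ∉ (cover g (Subgroup.zpowers γ)).boundaries) : conjLen γ ≤ l1Norm z := by
  set Y := cover g (Subgroup.zpowers γ)
  obtain ⟨c, ⟨hc, hcB⟩, hcmin⟩ := exists_minimalFor_of_wellFoundedLT
    (fun z => z ∈ Y.cycles ∧ z ∉ Y.boundaries) l1Norm ⟨z, hz, hzB⟩
  have hmin : ∀ y ∈ Y.cycles, y ∉ Y.boundaries → l1Norm c ≤ l1Norm y := fun y hy hyB =>
    (le_total _ _).elim id (hcmin ⟨hy, hyB⟩)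
  refine le_trans ?_ (hmin z hz hzB)
  obtain ⟨v, l, hl, rfl, hlen⟩ := Complex.exists_walkFrom_walkChain_eq hc hcB hmin
  obtain ⟨u, rfl, hu⟩ := hl.exists_eq_relWalk
  obtain ⟨w, rfl⟩ := wordG_surjective γ
  obtain ⟨y, rfl⟩ := mkCos_surjective v
  obtain ⟨_, ⟨N, rfl⟩, _, hs, hsum⟩ := Submodule.mem_sup.1 (cycles_zpowers_le w hc)
  obtain ⟨k, rfl⟩ := Submodule.mem_span_singleton.1 hs
  have hk : k.natAbs ≤ 1 :=
    natAbs_le_one_of_forall_l1Norm_le (coverDual _)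
      (boundary₂_cover (J := Subgroup.zpowers (wordG w)) ▸ boundaries_cover_le_cycles)
      (fun _ hk _ => Complex.mem_cycles_of_smul_mem hk) hc (boundary₂_cover (g := g) ▸ hcB)
      (boundary₂_cover (g := g) ▸ hmin) (boundary₂_cover (g := g) ▸ hsum.symm.trans (add_comm _ _))
  have hk0 : k ≠ 0 := by
    rintro rfl
    exact hcB ⟨N, ((congrArg _ (zero_smul ℤ _)).trans (add_zero _)).symm.trans hsum⟩
  have hw : (1 : Gamma g) * wordG w * 1⁻¹ ∈ Subgroup.zpowers (wordG w) := by simp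
  have hpow := conj_eq_zpow_of_homologous hw (rmul_mkCos_eq_self_iff.1 hu.symm)
    ⟨N, eq_sub_of_add_eq hsum⟩
  rw [← hlen]
  exact (conjLen_le_of_conj_eq_zpow (by simpa using hpow) (by omega)).trans
    (length_relWalk _ _).ge

end CyclicCover

/-! ### The edges of the core surface -/

section CoreEdges

variable {g : ℕ} {J : Subgroup (Gamma g)}

theorem revW_relWalk (v : Cos g J) (w : List (Letter g)) :
    (cover g J).revW (relWalk g J v w) = relWalk g J (rmul g J (wordG w) v) (wordInv w) := by
  induction w generalizing v with
  | nil => rfl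
  | cons l w ih =>
    have hback : rmul g J (wordG (wordInv w)) (rmul g J (wordG (l :: w)) v) =
        rmul g J (letterG l) v := by
      rw [rmul_rmul, wordG_cons, wordG_wordInv, mul_inv_cancel_right]
    have hlast : relWalk g J (rmul g J (letterG l) v) [letterInv l] =
        [((letterDart J v l).1, !(letterDart J v l).2)] := by
      rw [relWalk_cons, letterDart_letterInv]
      rfl
    rw [wordInv_cons, relWalk_append, hback, hlast, wordG_cons, ← rmul_rmul, ← ih]
    exact (congrArg _ (relWalk_cons v l w)).trans (Complex.revW_append (Y := cover g J)
      [letterDart J v l] _)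

theorem length_le_conjLen {x : Gamma g} {w : List (Letter g)} (hJ : x * wordG w * x⁻¹ ∈ J)
    (h : (cover g J).ShortestRep Set.univ Set.univ (relWalk g J (mkCos g J x) w)) :
    w.length ≤ conjLen (x * wordG w * x⁻¹) := by
  refine le_csInf ⟨_, w, rfl, x, rfl⟩ ?_
  rintro _ ⟨u, rfl, y, hu⟩
  have hw := walkFrom_relWalk (mkCos g J x) w
  rw [rmul_mkCos_eq_self_iff.2 hJ] at hw
  have hyJ := rmul_mkCos_eq_self_iff.2 (hu ▸ hJ)
  have hu' := walkFrom_relWalk (mkCos g J y) u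
  rw [hyJ] at hu'
  obtain ⟨t, ht⟩ := wordG_surjective (x⁻¹ * y)
  have hxy : rmul g J (wordG t) (mkCos g J x) = mkCos g J y := by rw [ht, rmul_mkCos]; simp
  have hq := walkFrom_relWalk (mkCos g J x) t
  rw [hxy] at hq
  have hword : wordG w = wordG (t ++ u ++ wordInv t) := by
    rw [wordG_append, wordG_append, wordG_wordInv, ht, mul_assoc x⁻¹, mul_inv_rev, inv_inv,
      ← mul_assoc, mul_assoc x⁻¹, mul_assoc x⁻¹, hu]
    simp [mul_assoc]
  have hhom := homotopic_relWalk hword (mkCos g J x)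
  rw [rmul_mkCos_eq_self_iff.2 hJ, relWalk_append, relWalk_append, wordG_append, ← rmul_rmul, hxy,
    hyJ, ← hxy, ← revW_relWalk, hxy] at hhom
  have hle := h (relWalk g J (mkCos g J y) u) ⟨_, _, _, hw, hu', hq, fun _ _ => trivial,
    fun _ _ => trivial, fun _ _ => trivial, hhom⟩
  exact (length_relWalk _ _).ge.trans (hle.trans (length_relWalk _ _).le)

theorem Complex.GoodCycle.exists_eq_relWalk {c : List (cover g J).D}
    (hc : (cover g J).GoodCycle c) :
    ∃ x w, c = relWalk g J (mkCos g J x) w ∧ x * wordG w * x⁻¹ ∈ J ∧ x * wordG w * x⁻¹ ≠ 1 ∧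
      w.length ≤ conjLen (x * wordG w * x⁻¹) := by
  obtain ⟨⟨-, v, hv⟩, ⟨-, -, hess⟩, hshort⟩ := hc
  obtain ⟨x, rfl⟩ := mkCos_surjective v
  obtain ⟨w, rfl, hw⟩ := hv.exists_eq_relWalk
  have hJ := rmul_mkCos_eq_self_iff.1 hw.symm
  refine ⟨x, w, rfl, hJ, fun h1 => hess ⟨_, hv, ?_⟩, length_le_conjLen hJ hshort⟩
  have hnil : wordG w = wordG [] := by rw [wordG_nil]; simpa using h1
  have hhom := homotopic_relWalk hnil (mkCos g J x)
  rwa [← hw] at hhom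

theorem CarriesLoops.exists_eq_boundary {E₀ : Set (cover g J).E} (hE₀ : CarriesLoops E₀)
    {H : Subgroup (Gamma g)} (hHJ : H ≤ J) {x : Gamma g} {w : List (Letter g)}
    (h : x * wordG w * x⁻¹ ∈ H) :
    ∃ R, ∀ e, coverMapE hHJ e ∉ E₀ →
      walkChain (relWalk g H (mkCos g H x) w) e = (coverDual H).boundary R e := by
  obtain ⟨u, hu, N, hN⟩ := exists_homologous_loop h
  obtain ⟨_, ⟨R, rfl⟩, s, hs, hsum⟩ :=
    (Submodule.mem_sup (p := (cover g H).boundaries)).1 (hE₀ H hHJ (mkCos g H 1) rfl u (hu ▸ hHJ h))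
  rw [boundary₂_cover] at hN hsum
  refine ⟨R - N, fun e he => ?_⟩
  have hs0 : s e = 0 := by
    by_contra h0
    exact he ((Finsupp.mem_supported _ _).1 hs (Finsupp.mem_support_iff.2 h0))
  set U := walkChain (relWalk g H (mkCos g H 1) u)
  have hRe : (coverDual H).boundary R e = U e :=
    ((congrArg _ hs0).trans (add_zero _)).symm.trans (DFunLike.congr_fun hsum e)
  calc walkChain (relWalk g H (mkCos g H x) w) e
      = U e - (U e - walkChain (relWalk g H (mkCos g H x) w) e) := (sub_sub_cancel _ _).symm
    _ = (coverDual H).boundary R e - (coverDual H).boundary N e :=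
      congrArg₂ _ hRe.symm (DFunLike.congr_fun hN e).symm
    _ = (coverDual H).boundary (R - N) e :=
      (DFunLike.congr_fun (map_sub (coverDual H).boundary R N) e).symm

theorem walkChain_relWalk_eq_zero {E₀ : Finset (cover g J).E}
    (hE₀ : CarriesLoops (E₀ : Set (cover g J).E)) {K : (coverDual J).Region}
    (hEK : E₀ ⊆ K.edges) (hK : K.IsMinimal) {γ : Gamma g} (hγ : Subgroup.zpowers γ ≤ J)
    {x : Gamma g} {w : List (Letter g)} (hw : x * wordG w * x⁻¹ = γ) (h1 : γ ≠ 1)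
    (hlen : w.length ≤ conjLen γ) {e : Cos g (Subgroup.zpowers γ) × Fin (2 * g)}
    (he : coverMapE hγ e ∉ K.edges) :
    walkChain (relWalk g (Subgroup.zpowers γ) (mkCos g _ x) w) e = 0 := by
  have hmem : x * wordG w * x⁻¹ ∈ Subgroup.zpowers γ := hw ▸ Subgroup.mem_zpowers γ
  obtain ⟨R, hR⟩ := hE₀.exists_eq_boundary hγ hmem
  refine (coverDualCover hγ).eq_zero_of_mapEdge_notMem hK (R := R)
    (fun e he => hR e (he <| hEK ·)) (fun A => ?_) he
  have hB : (coverDual _).boundary A ∈ (cover g (Subgroup.zpowers γ)).boundaries :=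
    ⟨A, LinearMap.congr_fun boundary₂_cover A⟩
  have hnot := walkChain_notMem_boundaries hw h1
  calc l1Norm _ ≤ _ := l1Norm_walkChain_le _
    _ ≤ conjLen γ := (length_relWalk _ _).le.trans hlen
    _ ≤ _ := conjLen_le_l1Norm
      (sub_mem (walkChain_mem_cycles_of_conj_mem hmem) (boundaries_cover_le_cycles hB))
      fun h => hnot ((Submodule.sub_mem_iff_left _ hB).1 h)

theorem coreE1_subset_edges {E₀ : Finset (cover g J).E}
    (hE₀ : CarriesLoops (E₀ : Set (cover g J).E)) {K : (coverDual J).Region}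
    (hEK : E₀ ⊆ K.edges) (hK : K.IsMinimal) :
    coreE1 g J ⊆ (K.edges : Set (Cos g J × Fin (2 * g))) := by
  rintro e ⟨c, hc, b, he⟩
  obtain ⟨x, w, rfl, hJ, h1, hlen⟩ := hc.exists_eq_relWalk
  set γ := x * wordG w * x⁻¹
  have hle : Subgroup.zpowers γ ≤ J := Subgroup.zpowers_le.2 hJ
  have hmem : x * wordG w * x⁻¹ ∈ Subgroup.zpowers γ := Subgroup.mem_zpowers γ
  have hnorm : l1Norm (walkChain (relWalk g (Subgroup.zpowers γ) (mkCos g _ x) w)) =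
      (relWalk g (Subgroup.zpowers γ) (mkCos g _ x) w).length :=
    (l1Norm_walkChain_le _).antisymm <| (length_relWalk _ _).le.trans <| hlen.trans <|
      conjLen_le_l1Norm (walkChain_mem_cycles_of_conj_mem hmem) (walkChain_notMem_boundaries rfl h1)
  have hlift := map_coverMapD_relWalk hle (mkCos g _ x) w
  obtain ⟨d, hd, hde⟩ := List.mem_map.1 (hlift ▸ he)
  by_contra heK
  refine walkChain_ne_zero_of_l1Norm_eq_length hnorm hd
    (walkChain_relWalk_eq_zero hE₀ hEK hK hle rfl h1 hlen ?_)
  rwa [show coverMapE hle d.1 = e from congrArg Prod.fst hde]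

end CoreEdges

/-! ### Components of the complement -/

namespace Complex

variable {g : ℕ} {Y : Complex g} {S : SubC Y} {a b c : Y.Cell}

theorem reachS_symm (h : Y.reachS S a b) : Y.reachS S b a :=
  have : Std.Symm fun a b => Y.incid a b ∧ ¬Y.inSub S a ∧ ¬Y.inSub S b :=
    ⟨fun _ _ hab => ⟨hab.1.symm, hab.2.2, hab.2.1⟩⟩
  symm_of (Relation.ReflTransGen _) h

theorem reachS_of_inc0 (h : Y.inc0 a b) (ha : ¬Y.inSub S a) (hb : ¬Y.inSub S b) :
    Y.reachS S a b :=
  .single ⟨.inl h, ha, hb⟩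

end Complex

section Complement

variable {g : ℕ} {J : Subgroup (Gamma g)}

theorem letterDart_mem_relWalk_relatorWord (v : Cos g J) (l : Letter g) :
    letterDart J v l ∈
      relWalk g J (rmul g J (relPrefix g (relatorEquiv l))⁻¹ v) (relatorWord g) := by
  have hmem : letterDart J v l ∈ relWalk g J (rmul g J (relPrefix g (relatorEquiv l))⁻¹ v)
      ((relatorWord g).take (relatorEquiv l) ++ (relatorWord g).drop (relatorEquiv l)) := by
    rw [List.drop_eq_getElem?_toList_append, getElem?_relatorWord_relatorEquiv, relWalk_append,
      ← relPrefix]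
    simp [relWalk_cons]
  rwa [List.take_append_drop] at hmem

theorem inc0_eCell_left (e : (cover g J).E) :
    (cover g J).inc0 ((cover g J).eCell e) ((cover g J).fCell ((coverDual J).left e)) :=
  ⟨true, letterDart_mem_relWalk_relatorWord e.1 (e.2, true)⟩

theorem inc0_eCell_right (e : (cover g J).E) :
    (cover g J).inc0 ((cover g J).eCell e) ((cover g J).fCell ((coverDual J).right e)) := by
  obtain ⟨v, i⟩ := e
  have hd : letterDart J (rmul g J (PresentedGroup.of i) v) (i, false) = ((v, i), false) := by
    simp [letterDart]
  have hmem := letterDart_mem_relWalk_relatorWord (rmul g J (PresentedGroup.of i) v) (i, false)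
  rw [coverDual_left_letterDart, hd] at hmem
  exact ⟨false, hmem⟩

theorem inc0_vCell_fCell (hg : 0 < g) (v : Cos g J) :
    (cover g J).inc0 ((cover g J).vCell v) ((cover g J).fCell v) := by
  have hmem := letterDart_mem_relWalk_relatorWord v (relatorEquiv.symm ⟨0, by omega⟩)
  simp only [Equiv.apply_symm_apply, relPrefix_zero, inv_one, rmul_one] at hmem
  exact ⟨_, hmem, dTail_letterDart _ _⟩

theorem coreFin_of_reachS {a b : (cover g J).Cell} (ha : coreFin g J a)
    (hb : ¬(cover g J).inSub (coreS1 g J) b) (h : (cover g J).reachS (coreS1 g J) a b) :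
    coreFin g J b :=
  ⟨hb, ha.2.subset fun _ hf => h.trans hf⟩

theorem not_inSub_fCell (f : Cos g J) :
    ¬(cover g J).inSub (coreS1 g J) ((cover g J).fCell f) :=
  fun h => h

/-- Otherwise the component would contain all the faces, as the dual graph is connected. -/
theorem exists_mem_coreE1_reachS [Infinite (Cos g J)] {f : Cos g J}
    (hf : coreFin g J ((cover g J).fCell f)) :
    ∃ e ∈ coreE1 g J,
      (cover g J).reachS (coreS1 g J) ((cover g J).fCell f)
        ((cover g J).fCell ((coverDual J).left e)) ∨
      (cover g J).reachS (coreS1 g J) ((cover g J).fCell f)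
        ((cover g J).fCell ((coverDual J).right e)) := by
  by_contra! hfar
  let A (x : Cos g J) : Prop :=
    (cover g J).reachS (coreS1 g J) ((cover g J).fCell f) ((cover g J).fCell x)
  have hA (e) : A ((coverDual J).left e) = A ((coverDual J).right e) := by
    by_cases he : e ∈ coreE1 g J
    · exact propext (iff_of_false (hfar e he).1 (hfar e he).2)
    have hleft := Complex.reachS_of_inc0 (S := coreS1 g J) (inc0_eCell_left e) he
      (not_inSub_fCell _)
    have hright := Complex.reachS_of_inc0 (S := coreS1 g J) (inc0_eCell_right e) he
      (not_inSub_fCell _)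
    exact propext ⟨fun h => (h.trans (Complex.reachS_symm hleft)).trans hright,
      fun h => (h.trans (Complex.reachS_symm hright)).trans hleft⟩
  have hall (u : Cos g J) : A u := (eq_of_left_eq_right hA f u).mp .refl
  exact Set.infinite_univ (α := Cos g J) (hf.2.subset fun u _ => hall u)

theorem finite_setOf_coreFin_fCell [Infinite (Cos g J)] (hE : (coreE1 g J).Finite) :
    {f | coreFin g J ((cover g J).fCell f)}.Finite := by
  let T : Set (Cos g J) := (coverDual J).left '' coreE1 g J ∪ (coverDual J).right '' coreE1 g J
  have hT : T.Finite := (hE.image _).union (hE.image _)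
  let comp (f' : Cos g J) : Set (Cos g J) :=
    {f | (cover g J).reachS (coreS1 g J) ((cover g J).fCell f') ((cover g J).fCell f)}
  refine ((hT.inter_of_left {f | coreFin g J ((cover g J).fCell f)}).biUnion (t := comp)
    fun f' hf' => hf'.2.2).subset fun f hf => ?_
  obtain ⟨f', hf', hreach⟩ : ∃ f' ∈ T,
      (cover g J).reachS (coreS1 g J) ((cover g J).fCell f) ((cover g J).fCell f') := by
    obtain ⟨e, he, h | h⟩ := exists_mem_coreE1_reachS hf
    exacts [⟨_, .inl ⟨e, he, rfl⟩, h⟩, ⟨_, .inr ⟨e, he, rfl⟩, h⟩]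
  exact Set.mem_biUnion ⟨hf', coreFin_of_reachS hf (not_inSub_fCell f') hreach⟩
    (Complex.reachS_symm hreach)

theorem finite_setOf_coreFin_eCell (hF : {f | coreFin g J ((cover g J).fCell f)}.Finite) :
    {e | coreFin g J ((cover g J).eCell e)}.Finite :=
  ((hF.prod Set.finite_univ).preimage (coverDual J).leftEquiv.injective.injOn).subset fun e he =>
    ⟨coreFin_of_reachS he (not_inSub_fCell _)
      (Complex.reachS_of_inc0 (inc0_eCell_left e) he.1 (not_inSub_fCell _)), trivial⟩

theorem finite_setOf_coreFin_vCell (hg : 0 < g)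
    (hF : {f | coreFin g J ((cover g J).fCell f)}.Finite) :
    {v | coreFin g J ((cover g J).vCell v)}.Finite :=
  hF.subset fun v hv => coreFin_of_reachS hv (not_inSub_fCell v)
    (Complex.reachS_of_inc0 (inc0_vCell_fCell hg v) hv.1 (not_inSub_fCell v))

theorem coreE1_finite (hg : 2 ≤ g) [Infinite (Cos g J)] (hJ : J.FG) : (coreE1 g J).Finite := by
  obtain ⟨E₀, hE₀⟩ := exists_finset_carriesLoops hJ
  obtain ⟨K, hEK, hK⟩ := DualGraph.Region.exists_isMinimal (card_faces_le hg hE₀.cycles_le)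
  exact K.edges.finite_toSet.subset (coreE1_subset_edges hE₀ hEK hK)

theorem coreV1_finite (hE : (coreE1 g J).Finite) : (coreV1 g J).Finite := by
  refine ((hE.image (cover g J).src).union (hE.image (cover g J).dst)).subset ?_
  rintro v ⟨e, he, h | h⟩
  exacts [.inl ⟨e, he, h⟩, .inr ⟨e, he, h⟩]

end Complement

/-- If `J ≤ Γ_g` is finitely generated, then the core surface
`Core(J)` is compact. -/
theorem statement_18 (g : ℕ) (hg : 2 ≤ g) (J : Subgroup (Gamma g)) (hfg : J.FG) :
    (coreSub g J).Compact := by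
  unfold coreSub
  split_ifs
  · exact ⟨Set.finite_singleton _, Set.finite_empty, Set.finite_empty⟩
  rcases finite_or_infinite (Cos g J) with hfin | hinf
  · have hfinE : Finite (Cos g J × Fin (2 * g)) := inferInstance
    exact ⟨Set.toFinite (α := Cos g J) _, Set.toFinite (α := Cos g J × Fin (2 * g)) _,
      Set.toFinite (α := Cos g J) _⟩
  · have hE := coreE1_finite hg hfg
    have hF := finite_setOf_coreFin_fCell hE
    exact ⟨(coreV1_finite hE).union (finite_setOf_coreFin_vCell (by omega) hF),
      hE.union (finite_setOf_coreFin_eCell hF), hF⟩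

end CS

end
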